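/- Commutator estimate for mollifiers: for κ > 0, h ∈ C¹(𝕋²) and g ∈ H^s(𝕋²) with 0 ≤ s ≤ 1, the commutator [Λ_κ, h] ∂̄ g := Λ_κ(h ∂̄ g) − h Λ_κ(∂̄ g), where ∂̄ is a horizontal derivative, satisfies |[Λ_κ, h] ∂̄ g|_{H^s} ≤ C ‖h‖_{C¹} |g|_{H^s}, with C independent of κ. -/

import Mathlib

open MeasureTheory

noncomputable section

/-- A fundamental domain for the torus `𝕋²`. -/
def TCube : Set (Fin 2 → ℝ) := {x | ∀ i, x i ∈ Set.Ioc (0:ℝ) 1}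

/-- Fourier coefficient of a (1-periodic) function on `𝕋²`. -/
def fCoeff (f : (Fin 2 → ℝ) → ℝ) (k : Fin 2 → ℤ) : ℂ :=
  ∫ x in TCube, (f x : ℂ) *
    Complex.exp (-(((2 * Real.pi * ∑ i, (k i : ℝ) * x i : ℝ) : ℂ)) * Complex.I)

/-- The squared `H^s(𝕋²)` norm, via Fourier coefficients. -/
def hsNormSq (s : ℝ) (f : (Fin 2 → ℝ) → ℝ) : ℝ :=
  ∑' k : Fin 2 → ℤ, ((1:ℝ) + ∑ i, ((k i : ℝ))^2) ^ s * ‖fCoeff f k‖^2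

/-- The horizontal mollifier `Λ_κ f = ρ_κ * f` with `ρ_κ(y) = κ⁻² ρ(y/κ)`. -/
def moll (ρ : (Fin 2 → ℝ) → ℝ) (κ : ℝ) (f : (Fin 2 → ℝ) → ℝ) (x : Fin 2 → ℝ) : ℝ :=
  ∫ y, (κ ^ 2)⁻¹ * ρ (κ⁻¹ • y) * f (x - y)

/-- The horizontal derivative `∂̄ = ∂_α` on `𝕋²`. -/
def pd2 (α : Fin 2) (g : (Fin 2 → ℝ) → ℝ) : (Fin 2 → ℝ) → ℝ :=
  fun x => fderiv ℝ g x (Pi.single α 1)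


attribute [local instance] instMeasureSpaceUnitAddCircle

lemma circ_haar : Measure.IsAddHaarMeasure (volume : Measure UnitAddCircle) :=
  inferInstanceAs (Measure.IsAddHaarMeasure AddCircle.haarAddCircle)

lemma circ_prob : IsProbabilityMeasure (volume : Measure UnitAddCircle) :=
  inferInstanceAs (IsProbabilityMeasure AddCircle.haarAddCircle)

attribute [local instance] circ_haar circ_prob

/-- Periodicity. -/
def Per {E : Type*} (f : (Fin 2 → ℝ) → E) : Prop :=
  ∀ (x : Fin 2 → ℝ) (k : Fin 2), f (x + Pi.single k 1) = f x

/-- quotient map to the torus -/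
def tmk (x : Fin 2 → ℝ) : UnitAddTorus (Fin 2) := fun i => (x i : UnitAddCircle)

/-- lift of a function to the torus -/
def tl {E : Type*} (f : (Fin 2 → ℝ) → E) (q : UnitAddTorus (Fin 2)) : E :=
  f (fun i => (AddCircle.equivIoc 1 0 (q i)).1)

lemma per_int {E : Type*} {f : (Fin 2 → ℝ) → E} (hf : Per f) (x : Fin 2 → ℝ) (n : Fin 2 → ℤ) :
    f (x + fun i => (n i : ℝ)) = f x := by
  have h : ∀ k : Fin 2, Function.Periodic f (Pi.single k 1) := fun k x => hf x k
  have h0 := (h 0).zsmul (n 0)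
  have h1 := (h 1).zsmul (n 1)
  have : (fun i => (n i : ℝ)) = (n 0) • (Pi.single 0 1 : Fin 2 → ℝ) + (n 1) • (Pi.single 1 1) := by
    funext i
    fin_cases i <;> simp
  rw [this, ← add_assoc, h1, h0]

lemma tl_tmk {E : Type*} {f : (Fin 2 → ℝ) → E} (hf : Per f) (x : Fin 2 → ℝ) :
    tl f (tmk x) = f x := by
  have : ∀ i, ∃ n : ℤ, (AddCircle.equivIoc 1 0 (x i : UnitAddCircle)).1 = x i + n := by
    intro i
    have h : (((AddCircle.equivIoc 1 0 (x i : UnitAddCircle)).1 : ℝ) : UnitAddCircle) = (x i : UnitAddCircle) :=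
      (AddCircle.equivIoc 1 0).symm_apply_apply (x i : UnitAddCircle)
    obtain ⟨n, hn⟩ := QuotientAddGroup.eq.mp h
    simp at hn
    exact ⟨-n, by push_cast; linarith⟩
  choose n hn using this
  have := per_int hf x n
  rw [← this]
  unfold tl tmk
  congr 1
  funext i
  exact hn i

lemma tmk_quot : IsOpenQuotientMap tmk :=
  IsOpenQuotientMap.piMap (fun _ => QuotientAddGroup.isOpenQuotientMap_mk)

lemma tl_cont {E : Type*} [TopologicalSpace E] {f : (Fin 2 → ℝ) → E} (hf : Per f)
    (hc : Continuous f) : Continuous (tl f) := by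
  rw [tmk_quot.isQuotientMap.continuous_iff]
  convert hc using 1
  funext x
  exact tl_tmk hf x

lemma tcube_eq : TCube = {x : Fin 2 → ℝ | ∀ i, x i ∈ Set.Ioc ((0 : Fin 2 → ℝ) i) ((0 : Fin 2 → ℝ) i + 1)} := by
  simp [TCube]

lemma tcube_int {E : Type*} [NormedAddCommGroup E] [NormedSpace ℝ E] {f : (Fin 2 → ℝ) → E}
    (hf : Per f) : ∫ x in TCube, f x = ∫ q, tl f q := by
  rw [UnitAddTorus.integral_preimage _ 0, ← tcube_eq]
  congr 1
  funext x
  exact (tl_tmk hf x).symm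

lemma per_shift {E : Type*} {f : (Fin 2 → ℝ) → E} (hf : Per f) (z : Fin 2 → ℝ) :
    Per (fun x => f (x + z)) := by
  intro x k
  show f (x + Pi.single k 1 + z) = f (x + z)
  rw [add_right_comm, hf]

lemma tcube_shift {E : Type*} [NormedAddCommGroup E] [NormedSpace ℝ E] {f : (Fin 2 → ℝ) → E}
    (hf : Per f) (z : Fin 2 → ℝ) : ∫ x in TCube, f (x + z) = ∫ x in TCube, f x := by
  rw [tcube_int hf, tcube_int (per_shift hf z)]
  rw [← integral_add_right_eq_self (tl f) (tmk z)]
  congr 1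
  funext q
  obtain ⟨x, rfl⟩ := tmk_quot.surjective q
  rw [tl_tmk (per_shift hf z)]
  exact (tl_tmk hf (x + z)).symm

lemma tcube_meas : MeasurableSet TCube :=
  MeasurableSet.univ_pi' (fun _ => measurableSet_Ioc)

lemma tcube_sub : TCube ⊆ Set.Icc (0 : Fin 2 → ℝ) 1 :=
  fun _ hx => ⟨fun i => (hx i).1.le, fun i => (hx i).2⟩

lemma tcube_intble {E : Type*} [NormedAddCommGroup E] {f : (Fin 2 → ℝ) → E}
    (hc : Continuous f) : IntegrableOn f TCube :=
  (hc.integrableOn_Icc).mono_set tcube_sub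

instance tcube_fin : IsFiniteMeasure (volume.restrict TCube) :=
  ⟨by
    rw [Measure.restrict_apply_univ]
    exact (measure_mono tcube_sub).trans_lt isCompact_Icc.measure_lt_top⟩

lemma per_bdd {E : Type*} [NormedAddCommGroup E] {f : (Fin 2 → ℝ) → E} (hf : Per f)
    (hc : Continuous f) : ∃ M, 0 ≤ M ∧ ∀ x, ‖f x‖ ≤ M := by
  obtain ⟨M, hM⟩ := isCompact_univ.exists_bound_of_continuousOn (tl_cont hf hc).continuousOn
  refine ⟨|M|, abs_nonneg _, fun x => ?_⟩
  rw [← tl_tmk hf x]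
  exact (hM _ trivial).trans (le_abs_self _)

/-- exponential -/
def ex (k : Fin 2 → ℤ) (x : Fin 2 → ℝ) : ℂ :=
  Complex.exp (-(((2 * Real.pi * ∑ i, (k i : ℝ) * x i : ℝ) : ℂ)) * Complex.I)

lemma ex_norm (k : Fin 2 → ℤ) (x : Fin 2 → ℝ) : ‖ex k x‖ = 1 := by
  unfold ex
  rw [← Complex.ofReal_neg, Complex.norm_exp_ofReal_mul_I]

lemma ex_add (k : Fin 2 → ℤ) (x y : Fin 2 → ℝ) : ex k (x + y) = ex k x * ex k y := by
  unfold ex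
  rw [← Complex.exp_add]
  congr 1
  simp only [Fin.sum_univ_two, Pi.add_apply]
  push_cast
  ring

lemma ex_mFourier (k : Fin 2 → ℤ) (x : Fin 2 → ℝ) :
    ex k x = UnitAddTorus.mFourier (-k) (tmk x) := by
  unfold ex UnitAddTorus.mFourier tmk
  simp only [Fin.sum_univ_two, ContinuousMap.coe_mk, Fin.prod_univ_two, fourier_coe_apply]
  rw [← Complex.exp_add]
  congr 1
  push_cast
  simp
  ring

lemma ex_per (k : Fin 2 → ℤ) : Per (ex k) := by
  intro x j
  rw [ex_mFourier, ex_mFourier]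
  congr 1
  funext i
  unfold tmk
  by_cases h : i = j
  · subst h; simp
  · simp [h]

lemma ex_contDiff (k : Fin 2 → ℤ) : ContDiff ℝ (⊤ : ℕ∞) (ex k) := by
  unfold ex
  apply ContDiff.cexp
  apply ContDiff.mul _ contDiff_const
  apply ContDiff.neg
  apply Complex.ofRealCLM.contDiff.comp
  exact contDiff_const.mul (by fun_prop)

lemma ex_cont (k : Fin 2 → ℤ) : Continuous (ex k) := (ex_contDiff k).continuous

lemma ex_fderiv (k : Fin 2 → ℤ) (j : Fin 2) (x : Fin 2 → ℝ) :
    fderiv ℝ (ex k) x (Pi.single j 1) = -(2 * Real.pi * (k j) * Complex.I) * ex k x := by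
  have hd : DifferentiableAt ℝ (ex k) x := (ex_contDiff k).differentiable (by simp) x
  rw [← hd.lineDeriv_eq_fderiv]
  have h : HasDerivAt (fun t : ℝ => ex k (x + t • Pi.single j 1))
      (-(2 * Real.pi * (k j) * Complex.I) * ex k x) 0 := by
    have e : (fun t : ℝ => ex k (x + t • Pi.single j 1)) =
        fun t : ℝ => ex k x * Complex.exp ((t : ℂ) * (-(2 * Real.pi * (k j) * Complex.I))) := by
      funext t
      rw [ex_add]
      congr 1
      unfold ex
      congr 1
      simp [Pi.single_apply]
      ring
    rw [e]
    have h1 : HasDerivAt (fun t : ℝ => (t : ℂ) * (-(2 * Real.pi * (k j) * Complex.I)))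
      (1 * (-(2 * Real.pi * (k j) * Complex.I))) 0 := (Complex.ofRealCLM.hasDerivAt).mul_const _
    refine ((h1.cexp).const_mul (ex k x)).congr_deriv ?_
    simp
    ring
  exact h.deriv

lemma fCoeff_eq (f : (Fin 2 → ℝ) → ℝ) (k : Fin 2 → ℤ) :
    fCoeff f k = ∫ x in TCube, (f x : ℂ) * ex k x := rfl

lemma fCoeff_mF {f : (Fin 2 → ℝ) → ℝ} (hf : Per f) (k : Fin 2 → ℤ) :
    fCoeff f k = UnitAddTorus.mFourierCoeff (tl (fun x => (f x : ℂ))) k := by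
  rw [fCoeff_eq, UnitAddTorus.mFourierCoeff_eq_integral _ _ 0, ← tcube_eq]
  congr 1
  funext x
  have : Per (fun x => (f x : ℂ)) := fun x k => by simp only [hf x k]
  rw [ex_mFourier, smul_eq_mul, mul_comm]
  congr 1
  exact (tl_tmk this x).symm

lemma parseval {f : (Fin 2 → ℝ) → ℝ} (hf : Per f) (hc : Continuous f) :
    HasSum (fun k => ‖fCoeff f k‖ ^ 2) (∫ x in TCube, (f x) ^ 2) := by
  have hp : Per (fun x => (f x : ℂ)) := fun x k => by simp only [hf x k]
  have hcc : Continuous (fun x => (f x : ℂ)) := by fun_prop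
  let F : C(UnitAddTorus (Fin 2), ℂ) := ⟨tl (fun x => (f x : ℂ)), tl_cont hp hcc⟩
  have := UnitAddTorus.hasSum_sq_mFourierCoeff (ContinuousMap.toLp (E := ℂ) 2 volume ℂ F)
  have hae := ContinuousMap.coeFn_toLp (p := 2) (𝕜 := ℂ) volume F
  have e1 : ∀ k, UnitAddTorus.mFourierCoeff (ContinuousMap.toLp (E := ℂ) 2 volume ℂ F) k = fCoeff f k := by
    intro k
    rw [fCoeff_mF hf]
    apply integral_congr_ae
    filter_upwards [hae] with x hx
    rw [hx]; rfl
  simp only [e1] at this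
  convert this using 1
  have hp2 : Per (fun x => (f x)^2) := fun x k => by simp only [hf x k]
  rw [tcube_int hp2]
  apply integral_congr_ae
  filter_upwards [hae] with x hx
  rw [hx]
  simp [F, tl]

lemma int_deriv_zero {u : (Fin 2 → ℝ) → ℂ} (hu : Per u) (hc : ContDiff ℝ 1 u) (j : Fin 2) :
    ∫ x in TCube, fderiv ℝ u x (Pi.single j 1) = 0 := by
  have hcont : Continuous (fun x => fderiv ℝ u x (Pi.single j 1)) :=
    (hc.continuous_fderiv (by simp)).clm_apply continuous_const
  have hper : Per (fun x => fderiv ℝ u x (Pi.single j 1)) := by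
    intro x k
    have : u = fun x => u (x + Pi.single k 1) := by funext x; rw [hu]
    show fderiv ℝ u (x + Pi.single k 1) _ = fderiv ℝ u x _
    conv_rhs => rw [this]
    rw [fderiv_comp_add_right]
  set I := ∫ x in TCube, fderiv ℝ u x (Pi.single j 1) with hI
  have h1 : ∫ τ in (0:ℝ)..1, ∫ x in TCube, fderiv ℝ u (x + τ • Pi.single j 1) (Pi.single j 1) = I := by
    have : ∀ τ : ℝ, ∫ x in TCube, fderiv ℝ u (x + τ • Pi.single j 1) (Pi.single j 1) = I :=
      fun τ => tcube_shift hper _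
    simp [this]
  have h2 : ∀ x, ∫ τ in (0:ℝ)..1, fderiv ℝ u (x + τ • Pi.single j 1) (Pi.single j 1) = 0 := by
    intro x
    rw [intervalIntegral.integral_eq_sub_of_hasDerivAt (f := fun τ : ℝ => u (x + τ • Pi.single j 1))]
    · simp [hu x j]
    · intro τ _
      have hd : HasFDerivAt u (fderiv ℝ u (x + τ • Pi.single j 1)) (x + τ • Pi.single j 1) :=
        (hc.differentiable (by simp) _).hasFDerivAt
      have h3 : HasDerivAt (fun τ : ℝ => x + τ • (Pi.single j 1 : Fin 2 → ℝ)) (Pi.single j 1) τ := by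
        simpa using ((hasDerivAt_id τ).smul_const (Pi.single j 1 : Fin 2 → ℝ)).const_add x
      exact hd.comp_hasDerivAt τ h3
    · apply Continuous.intervalIntegrable
      exact hcont.comp (by fun_prop)
  rw [← h1, intervalIntegral.integral_of_le zero_le_one, integral_integral_swap]
  · simp_rw [← intervalIntegral.integral_of_le zero_le_one (μ := volume)]
    simp [h2]
  · obtain ⟨M, -, hM⟩ := per_bdd hper hcont
    apply Integrable.of_bound (C := M)
    · apply Continuous.aestronglyMeasurable
      exact hcont.comp (g := fun x => fderiv ℝ u x (Pi.single j 1)) (f := fun p : ℝ × (Fin 2 → ℝ) => p.2 + p.1 • (Pi.single j 1 : Fin 2 → ℝ)) (by fun_prop)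
    · exact Filter.Eventually.of_forall fun p => hM _

lemma pd2_cont {f : (Fin 2 → ℝ) → ℝ} (hc : ContDiff ℝ 1 f) (j : Fin 2) : Continuous (pd2 j f) :=
    (hc.continuous_fderiv (by simp)).clm_apply continuous_const

lemma pd2_per {f : (Fin 2 → ℝ) → ℝ} (hf : Per f) (j : Fin 2) : Per (pd2 j f) := by
  intro x k
  unfold pd2
  have : f = fun x => f (x + Pi.single k 1) := by funext x; rw [hf]
  conv_rhs => rw [this]
  rw [fderiv_comp_add_right]

lemma fCoeff_pd2 {f : (Fin 2 → ℝ) → ℝ} (hf : Per f) (hc : ContDiff ℝ 1 f) (j : Fin 2)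
    (k : Fin 2 → ℤ) : fCoeff (pd2 j f) k = (2 * Real.pi * (k j) * Complex.I) * fCoeff f k := by
  have hC : ContDiff ℝ 1 (fun x => (f x : ℂ)) := Complex.ofRealCLM.contDiff.comp hc
  have hE : ContDiff ℝ 1 (ex k) := (ex_contDiff k).of_le (by norm_cast)
  have h := int_deriv_zero (u := fun x => (f x : ℂ) * ex k x)
    (fun x l => by simp only [hf x l, ex_per k x l]) (hC.mul hE) j
  have e : ∀ x, fderiv ℝ (fun x => (f x : ℂ) * ex k x) x (Pi.single j 1) =
      (pd2 j f x : ℂ) * ex k x - (2 * Real.pi * (k j) * Complex.I) * ((f x : ℂ) * ex k x) := by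
    intro x
    rw [fderiv_fun_mul (hC.differentiable (by simp) x) (hE.differentiable (by simp) x)]
    have : fderiv ℝ (fun x => (f x : ℂ)) x (Pi.single j 1) = (pd2 j f x : ℂ) := by
      have := (Complex.ofRealCLM.hasFDerivAt).comp x (hc.differentiable (by simp) x).hasFDerivAt
      have := this.fderiv
      unfold Function.comp at this
      simp only [Complex.ofRealCLM_apply] at this
      rw [this]; rfl
    simp only [add_apply, smul_apply, smul_eq_mul, this, ex_fderiv]
    ring
  simp_rw [e] at h
  have c1 := pd2_cont hc j
  have c2 := hc.continuous
  have c3 := ex_cont k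
  rw [integral_sub, integral_const_mul, sub_eq_zero] at h
  · exact h
  · exact tcube_intble (by fun_prop)
  · exact tcube_intble (by fun_prop)

/-- mollification after change of variables -/
def mo {E : Type} [NormedAddCommGroup E] [NormedSpace ℝ E] (ρ : (Fin 2 → ℝ) → ℝ) (κ : ℝ)
    (u : (Fin 2 → ℝ) → E) (x : Fin 2 → ℝ) : E := ∫ z, ρ z • u (x - κ • z)

lemma moll_eq (ρ : (Fin 2 → ℝ) → ℝ) {κ : ℝ} (hκ : 0 < κ) (f : (Fin 2 → ℝ) → ℝ) :
    moll ρ κ f = mo ρ κ f := by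
  funext x
  unfold moll mo
  have := Measure.integral_comp_inv_smul_of_nonneg (volume : Measure (Fin 2 → ℝ))
    (fun z => ρ z • f (x - κ • z)) hκ.le
  simp only [smul_inv_smul₀ hκ.ne', Module.finrank_fin_fun, smul_eq_mul] at this
  simp only [mul_assoc, integral_const_mul, this, smul_eq_mul]
  field_simp

lemma cs_int {E : Type*} [NormedAddCommGroup E] [NormedSpace ℝ E] {φ : (Fin 2 → ℝ) → ℝ}
    (hφ : Continuous φ) (hs : HasCompactSupport φ) {v : (Fin 2 → ℝ) → E} (hv : Continuous v) :
    Integrable (fun z => φ z • v z) :=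
  (hφ.smul hv).integrable_of_hasCompactSupport hs.smul_right

lemma cs_int' {φ : (Fin 2 → ℝ) → ℝ}
    (hφ : Continuous φ) (hs : HasCompactSupport φ) {v : (Fin 2 → ℝ) → ℝ} (hv : Continuous v) :
    Integrable (fun z => φ z * v z) := cs_int hφ hs hv

lemma per_sub {E : Type*} {f : (Fin 2 → ℝ) → E} (hf : Per f) (z : Fin 2 → ℝ) :
    Per (fun x => f (x - z)) := by
  simpa only [sub_eq_add_neg] using per_shift hf (-z)

section
variable {E : Type} [NormedAddCommGroup E] [NormedSpace ℝ E] {ρ : (Fin 2 → ℝ) → ℝ}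
  {u : (Fin 2 → ℝ) → E}

lemma mo_per (ρ : (Fin 2 → ℝ) → ℝ) (κ : ℝ) (hu : Per u) : Per (mo ρ κ u) := by
  intro x k
  unfold mo
  congr 1
  funext z
  exact congrArg _ (per_sub hu (κ • z) x k)

lemma mo_cont (hρ : Continuous ρ) (hs : HasCompactSupport ρ) (κ : ℝ) (hu : Per u)
    (hc : Continuous u) : Continuous (mo ρ κ u) := by
  obtain ⟨M, hM0, hM⟩ := per_bdd hu hc
  apply continuous_of_dominated (bound := fun z => |ρ z| * M)
  · intro x
    apply Continuous.aestronglyMeasurable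
    fun_prop
  · intro x
    refine Filter.Eventually.of_forall fun z => ?_
    rw [norm_smul, Real.norm_eq_abs]
    gcongr
    exact hM _
  · exact (hρ.integrable_of_hasCompactSupport hs).abs.mul_const M
  · refine Filter.Eventually.of_forall fun z => ?_
    fun_prop

lemma fderiv_per (hu : Per u) : Per (fderiv ℝ u) := by
  intro x k
  have : u = fun x => u (x + Pi.single k 1) := by funext x; rw [hu]
  conv_rhs => rw [this]
  rw [fderiv_comp_add_right]

lemma mo_hasFDerivAt (hρ : Continuous ρ) (hs : HasCompactSupport ρ) (κ : ℝ) (hu : Per u)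
    (hc : ContDiff ℝ 1 u) (x : Fin 2 → ℝ) :
    HasFDerivAt (mo ρ κ u) (mo ρ κ (fderiv ℝ u) x) x := by
  have hc' : Continuous (fderiv ℝ u) := hc.continuous_fderiv (by simp)
  have hc0 := hc.continuous
  obtain ⟨M, hM0, hM⟩ := per_bdd (fderiv_per hu) hc'
  apply hasFDerivAt_integral_of_dominated_of_fderiv_le (bound := fun z => |ρ z| * M)
    (F := fun x z => ρ z • u (x - κ • z)) (F' := fun x z => ρ z • fderiv ℝ u (x - κ • z))
    (s := Set.univ) Filter.univ_mem
  · refine Filter.Eventually.of_forall fun x => ?_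
    apply Continuous.aestronglyMeasurable
    fun_prop
  · exact cs_int hρ hs (by fun_prop)
  · have : SecondCountableTopologyEither (Fin 2 → ℝ) ((Fin 2 → ℝ) →L[ℝ] E) :=
      secondCountableTopologyEither_of_left _ _
    apply Continuous.aestronglyMeasurable
    fun_prop
  · refine Filter.Eventually.of_forall fun z y _ => ?_
    rw [norm_smul, Real.norm_eq_abs]
    gcongr
    exact hM _
  · exact (hρ.integrable_of_hasCompactSupport hs).abs.mul_const M
  · refine Filter.Eventually.of_forall fun z y _ => ?_
    apply HasFDerivAt.const_smul
    have := (hc.differentiable (by simp) (y - κ • z)).hasFDerivAt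
    rw [← hasFDerivAt_comp_sub (κ • z)] at this
    exact this

end

lemma mo_contDiff {ρ : (Fin 2 → ℝ) → ℝ} (hρ : Continuous ρ) (hs : HasCompactSupport ρ) (κ : ℝ)
    (n : ℕ) : ∀ (E : Type) [NormedAddCommGroup E] [NormedSpace ℝ E] (u : (Fin 2 → ℝ) → E),
    Per u → ContDiff ℝ n u → ContDiff ℝ n (mo ρ κ u) := by
  induction n with
  | zero =>
    intro E _ _ u hu hc
    simp only [Nat.cast_zero, contDiff_zero] at hc ⊢
    exact mo_cont hρ hs κ hu hc
  | succ n ih =>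
    intro E _ _ u hu hc
    have h1 : ContDiff ℝ 1 u := hc.of_le (by norm_cast; omega)
    have hd := mo_hasFDerivAt hρ hs κ hu h1
    push_cast at hc ⊢
    rw [contDiff_succ_iff_hasFDerivAt]
    refine ⟨_, ih _ _ (fderiv_per hu) ?_, hd⟩
    exact hc.fderiv_right le_rfl

lemma mo_pd2 {ρ : (Fin 2 → ℝ) → ℝ} (hρ : Continuous ρ) (hs : HasCompactSupport ρ) (κ : ℝ)
    {u : (Fin 2 → ℝ) → ℝ} (hu : Per u) (hc : ContDiff ℝ 1 u) (j : Fin 2) :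
    pd2 j (mo ρ κ u) = mo ρ κ (pd2 j u) := by
  funext x
  have hc' : Continuous (fderiv ℝ u) := hc.continuous_fderiv (by simp)
  unfold pd2
  rw [(mo_hasFDerivAt hρ hs κ hu hc x).fderiv]
  unfold mo
  rw [ContinuousLinearMap.integral_apply]
  · rfl
  · exact cs_int hρ hs (by fun_prop)

lemma cs_cauchy {Φ a : (Fin 2 → ℝ) → ℝ} (hΦ : Continuous Φ) (hs : HasCompactSupport Φ)
    (h0 : ∀ z, 0 ≤ Φ z) (ha : Continuous a) :
    (∫ z, Φ z * a z) ^ 2 ≤ (∫ z, Φ z) * ∫ z, Φ z * a z ^ 2 := by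
  have key : ∀ m : ℝ, 0 ≤ (∫ z, Φ z * a z ^ 2) - 2 * m * (∫ z, Φ z * a z) + m ^ 2 * ∫ z, Φ z := by
    intro m
    have h : 0 ≤ ∫ z, Φ z * (a z - m) ^ 2 := integral_nonneg fun z => mul_nonneg (h0 z) (sq_nonneg _)
    have e : ∀ z, Φ z * (a z - m) ^ 2 = Φ z * a z ^ 2 - 2 * m * (Φ z * a z) + m ^ 2 * Φ z := by
      intro z; ring
    simp_rw [e] at h
    have i1 := cs_int' hΦ hs (v := fun z => a z ^ 2) (by fun_prop)
    have i2 := cs_int' hΦ hs ha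
    have i3 := hΦ.integrable_of_hasCompactSupport hs (μ := volume)
    have i4 : Integrable (fun z => Φ z * a z ^ 2 - 2 * m * (Φ z * a z)) := i1.sub (i2.const_mul _)
    rw [integral_add i4 (i3.const_mul _), integral_sub i1 (i2.const_mul _),
      integral_const_mul, integral_const_mul] at h
    exact h
  set A := ∫ z, Φ z
  set B := ∫ z, Φ z * a z
  set D := ∫ z, Φ z * a z ^ 2
  have hA : 0 ≤ A := integral_nonneg h0
  rcases hA.eq_or_lt with hA | hA
  · rw [← hA] at key ⊢
    by_cases hB : B = 0
    · simp [hB]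
    · have := key ((D + 1) / (2 * B))
      have e : 2 * ((D + 1) / (2 * B)) * B = D + 1 := by field_simp
      rw [e] at this
      linarith
  · have := key (B / A)
    have e : D - 2 * (B / A) * B + (B / A) ^ 2 * A = (A * D - B ^ 2) / A := by field_simp; ring
    rw [e, le_div_iff₀ hA] at this
    linarith

lemma young {Φ f G : (Fin 2 → ℝ) → ℝ} (hΦ : Continuous Φ) (hs : HasCompactSupport Φ)
    (h0 : ∀ z, 0 ≤ Φ z) (hf : Per f) (hc : Continuous f) (hG : Continuous G) (κ c : ℝ)
    (hle : ∀ x, |G x| ≤ c * ∫ z, Φ z * |f (x - κ • z)|) :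
    ∫ x in TCube, G x ^ 2 ≤ c ^ 2 * (∫ z, Φ z) ^ 2 * ∫ x in TCube, f x ^ 2 := by
  have hp2 : Per (fun x => f x ^ 2) := fun x k => by simp only [hf x k]
  have hpt : ∀ x, G x ^ 2 ≤ c ^ 2 * (∫ z, Φ z) * ∫ z, Φ z * f (x - κ • z) ^ 2 := by
    intro x
    have h1 := cs_cauchy hΦ hs h0 (a := fun z => |f (x - κ • z)|) (by fun_prop)
    simp only [sq_abs] at h1
    calc G x ^ 2 = |G x| ^ 2 := (sq_abs _).symm
      _ ≤ (c * ∫ z, Φ z * |f (x - κ • z)|) ^ 2 := by gcongr; exact hle x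
      _ = c ^ 2 * (∫ z, Φ z * |f (x - κ • z)|) ^ 2 := by ring
      _ ≤ c ^ 2 * ((∫ z, Φ z) * ∫ z, Φ z * f (x - κ • z) ^ 2) := by gcongr
      _ = _ := by ring
  have hcm : Continuous (fun x => ∫ z, Φ z * f (x - κ • z) ^ 2) := mo_cont hΦ hs κ hp2 (by fun_prop)
  calc ∫ x in TCube, G x ^ 2 ≤ ∫ x in TCube, c ^ 2 * (∫ z, Φ z) * ∫ z, Φ z * f (x - κ • z) ^ 2 := by
        apply setIntegral_mono (tcube_intble (by fun_prop)) (tcube_intble (by fun_prop))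
        exact hpt
    _ = c ^ 2 * (∫ z, Φ z) * ∫ x in TCube, ∫ z, Φ z * f (x - κ • z) ^ 2 := by
        rw [integral_const_mul]
    _ = c ^ 2 * (∫ z, Φ z) * ∫ z, ∫ x in TCube, Φ z * f (x - κ • z) ^ 2 := by
        rw [integral_integral_swap]
        obtain ⟨M, hM0, hM⟩ := per_bdd hp2 (by fun_prop)
        have i3 := hΦ.integrable_of_hasCompactSupport hs (μ := volume)
        apply Integrable.mono' ((i3.comp_snd (volume.restrict TCube)).mul_const M)
        · apply Continuous.aestronglyMeasurable
          fun_prop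
        · refine Filter.Eventually.of_forall fun p => ?_
          simp only [Function.uncurry]
          rw [norm_mul, Real.norm_of_nonneg (h0 _)]
          exact mul_le_mul_of_nonneg_left (hM _) (h0 _)
    _ = c ^ 2 * (∫ z, Φ z) * ∫ z, Φ z * ∫ x in TCube, f x ^ 2 := by
        congr 2
        funext z
        rw [integral_const_mul]
        congr 1
        have := tcube_shift hp2 (-(κ • z))
        simpa only [← sub_eq_add_neg] using this
    _ = _ := by rw [integral_mul_const]; ring

/-- the commutator -/
def Tc (ρ : (Fin 2 → ℝ) → ℝ) (κ : ℝ) (h : (Fin 2 → ℝ) → ℝ) (α : Fin 2) (f : (Fin 2 → ℝ) → ℝ)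
    (x : Fin 2 → ℝ) : ℝ :=
  mo ρ κ (fun y => h y * pd2 α f y) x - h x * mo ρ κ (pd2 α f) x

/-- the kernel in the basic estimate -/
def PhiA (ρ : (Fin 2 → ℝ) → ℝ) (α : Fin 2) (z : Fin 2 → ℝ) : ℝ :=
  2 * ‖z‖ * |pd2 α ρ z| + ρ z

lemma pd2_cs {ρ : (Fin 2 → ℝ) → ℝ} (hs : HasCompactSupport ρ) (α : Fin 2) :
    HasCompactSupport (pd2 α ρ) := hs.fderiv_apply ℝ _

lemma PhiA_cs {ρ : (Fin 2 → ℝ) → ℝ} (hs : HasCompactSupport ρ) (α : Fin 2) :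
    HasCompactSupport (PhiA ρ α) :=
  HasCompactSupport.add (HasCompactSupport.mul_left (pd2_cs hs α).abs) hs

lemma PhiA_cont {ρ : (Fin 2 → ℝ) → ℝ} (hρ : ContDiff ℝ 1 ρ) (α : Fin 2) :
    Continuous (PhiA ρ α) := by
  have := pd2_cont hρ α
  have := hρ.continuous
  unfold PhiA
  fun_prop

lemma fderiv_bd {h : (Fin 2 → ℝ) → ℝ} {Mh : ℝ} (hM0 : 0 ≤ Mh) (hM : ∀ x i, |pd2 i h x| ≤ Mh)
    (y : Fin 2 → ℝ) : ‖fderiv ℝ h y‖ ≤ 2 * Mh := by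
  apply ContinuousLinearMap.opNorm_le_bound _ (by positivity)
  intro v
  have e : v = v 0 • (Pi.single 0 1 : Fin 2 → ℝ) + v 1 • (Pi.single 1 1 : Fin 2 → ℝ) := by
    funext i; fin_cases i <;> simp
  have e2 : fderiv ℝ h y v = v 0 * pd2 0 h y + v 1 * pd2 1 h y := by
    conv_lhs => rw [e]
    rw [map_add, map_smul, map_smul]; rfl
  rw [e2]
  have n0 : |v 0| ≤ ‖v‖ := norm_le_pi_norm v 0
  have n1 : |v 1| ≤ ‖v‖ := norm_le_pi_norm v 1
  calc ‖v 0 * pd2 0 h y + v 1 * pd2 1 h y‖ ≤ |v 0| * |pd2 0 h y| + |v 1| * |pd2 1 h y| := by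
        rw [← abs_mul, ← abs_mul]; exact abs_add_le _ _
    _ ≤ ‖v‖ * Mh + ‖v‖ * Mh := by gcongr <;> exact hM _ _
    _ = _ := by ring

lemma h_diff {h : (Fin 2 → ℝ) → ℝ} {Mh : ℝ} (hh : ContDiff ℝ 1 h) (hM0 : 0 ≤ Mh)
    (hM : ∀ x i, |pd2 i h x| ≤ Mh) {κ : ℝ} (hκ : 0 < κ) (x z : Fin 2 → ℝ) :
    |h (x - κ • z) - h x| ≤ 2 * Mh * (κ * ‖z‖) := by
  have := Convex.norm_image_sub_le_of_norm_fderiv_le (𝕜 := ℝ) (f := h) (s := Set.univ) (C := 2 * Mh)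
    (fun y _ => hh.differentiable (by simp) y) (fun y _ => fderiv_bd hM0 hM y) convex_univ
    (Set.mem_univ x) (Set.mem_univ (x - κ • z))
  simpa [norm_smul, abs_of_pos hκ] using this

lemma Tc_int {ρ h f : (Fin 2 → ℝ) → ℝ} (hρ : Continuous ρ) (hs : HasCompactSupport ρ)
    (hh : Continuous h) (hf : ContDiff ℝ 1 f) (κ : ℝ) (α : Fin 2) (x : Fin 2 → ℝ) :
    Tc ρ κ h α f x = ∫ z, ρ z * (h (x - κ • z) - h x) * pd2 α f (x - κ • z) := by
  have hp := pd2_cont hf α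
  unfold Tc mo
  rw [← integral_const_mul, ← integral_sub]
  · congr 1
    funext z
    simp only [smul_eq_mul]
    ring
  · exact cs_int hρ hs (by fun_prop)
  · exact (cs_int hρ hs (by fun_prop)).const_mul _

lemma Tc_pt {ρ h f : (Fin 2 → ℝ) → ℝ} (hρ : ContDiff ℝ 1 ρ) (hs : HasCompactSupport ρ)
    (h0 : ∀ z, 0 ≤ ρ z) (hh : ContDiff ℝ 1 h) (hf : ContDiff ℝ 1 f) {κ : ℝ} (hκ : 0 < κ)
    (α : Fin 2) {Mh : ℝ} (hM0 : 0 ≤ Mh) (hM : ∀ x i, |pd2 i h x| ≤ Mh) (x : Fin 2 → ℝ) :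
    |Tc ρ κ h α f x| ≤ Mh * ∫ z, PhiA ρ α z * |f (x - κ • z)| := by
  have hp := pd2_cont hf α
  have hph := pd2_cont hh α
  have hpρ := pd2_cont hρ α
  have cρ := hρ.continuous
  have ch := hh.continuous
  have cf := hf.continuous
  have shift : ∀ u : (Fin 2 → ℝ) → ℝ, ContDiff ℝ 1 u → ∀ z,
      HasFDerivAt (fun z => u (x - κ • z)) (-(κ • fderiv ℝ u (x - κ • z))) z := by
    intro u hu z
    have h1 : HasFDerivAt (fun z : Fin 2 → ℝ => x - κ • z)
        (-(κ • ContinuousLinearMap.id ℝ (Fin 2 → ℝ))) z :=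
      ((hasFDerivAt_id z).const_smul κ).const_sub x
    refine ((hu.differentiable (by simp) (x - κ • z)).hasFDerivAt.comp z h1).congr_fderiv ?_
    ext v
    simp
  have hφ : ∀ z, HasFDerivAt (fun z => ρ z * (h (x - κ • z) - h x))
      (ρ z • (-(κ • fderiv ℝ h (x - κ • z))) + (h (x - κ • z) - h x) • fderiv ℝ ρ z) z := fun z =>
    ((hρ.differentiable (by simp) z).hasFDerivAt).mul ((shift h hh z).sub_const _)
  have ibp := integral_bilinear_hasFDerivAt_right_eq_neg_left_of_integrable
    (μ := (volume : Measure (Fin 2 → ℝ)))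
    (f := fun z => ρ z * (h (x - κ • z) - h x)) (g := fun z => f (x - κ • z))
    (f' := fun z => (ρ z • (-(κ • fderiv ℝ h (x - κ • z))) + (h (x - κ • z) - h x) • fderiv ℝ ρ z))
    (g' := fun z => (-(κ • fderiv ℝ f (x - κ • z)))) (v := Pi.single α 1)
    (B := ContinuousLinearMap.mul ℝ ℝ)
  have ef : ∀ z, (ContinuousLinearMap.mul ℝ ℝ) ((ρ z • (-(κ • fderiv ℝ h (x - κ • z))) +
      (h (x - κ • z) - h x) • fderiv ℝ ρ z) (Pi.single α 1)) (f (x - κ • z)) =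
      (pd2 α ρ z) * ((h (x - κ • z) - h x) * f (x - κ • z)) -
        κ * (ρ z * (pd2 α h (x - κ • z) * f (x - κ • z))) := by
    intro z
    simp [pd2]
    ring
  have eg : ∀ z, (ContinuousLinearMap.mul ℝ ℝ) (ρ z * (h (x - κ • z) - h x))
      ((-(κ • fderiv ℝ f (x - κ • z))) (Pi.single α 1)) =
      -κ * (ρ z * ((h (x - κ • z) - h x) * pd2 α f (x - κ • z))) := by
    intro z
    simp [pd2]
    ring
  simp only [ef, eg] at ibp
  have I1 : Integrable (fun z => (pd2 α ρ z) * ((h (x - κ • z) - h x) * f (x - κ • z)) -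
        κ * (ρ z * (pd2 α h (x - κ • z) * f (x - κ • z)))) :=
    (cs_int' hpρ (pd2_cs hs α) (by fun_prop)).sub ((cs_int' cρ hs (by fun_prop)).const_mul _)
  have key := ibp I1 ((cs_int' cρ hs (by fun_prop)).const_mul _)
    (by
      have := cs_int' cρ hs (v := fun z => (h (x - κ • z) - h x) * f (x - κ • z)) (by fun_prop)
      simpa [mul_assoc] using this) (fun z _ => hφ z) (fun z _ => shift f hf z)
  rw [integral_const_mul] at key
  have e3 : Tc ρ κ h α f x = ∫ z, ρ z * ((h (x - κ • z) - h x) * pd2 α f (x - κ • z)) := by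
    rw [Tc_int cρ hs ch hf]
    simp only [mul_assoc]
  rw [← e3] at key
  have key2 : κ * Tc ρ κ h α f x = ∫ z, ((pd2 α ρ z) * ((h (x - κ • z) - h x) * f (x - κ • z)) -
        κ * (ρ z * (pd2 α h (x - κ • z) * f (x - κ • z)))) := by linarith
  have key3 : |κ * Tc ρ κ h α f x| ≤ ∫ z, κ * Mh * (PhiA ρ α z * |f (x - κ • z)|) := by
    rw [key2]
    refine (abs_integral_le_integral_abs).trans ?_
    apply integral_mono I1.abs
      ((cs_int' (PhiA_cont hρ α) (PhiA_cs hs α) (by fun_prop)).const_mul _)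
    intro z
    simp only
    calc |(pd2 α ρ z) * ((h (x - κ • z) - h x) * f (x - κ • z)) -
        κ * (ρ z * (pd2 α h (x - κ • z) * f (x - κ • z)))|
        ≤ |(pd2 α ρ z) * ((h (x - κ • z) - h x) * f (x - κ • z))| +
        |κ * (ρ z * (pd2 α h (x - κ • z) * f (x - κ • z)))| := abs_sub _ _
      _ = |pd2 α ρ z| * (|h (x - κ • z) - h x| * |f (x - κ • z)|) +
        κ * (ρ z * (|pd2 α h (x - κ • z)| * |f (x - κ • z)|)) := by
          simp only [abs_mul, abs_of_pos hκ, abs_of_nonneg (h0 z)]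
      _ ≤ |pd2 α ρ z| * ((2 * Mh * (κ * ‖z‖)) * |f (x - κ • z)|) +
        κ * (ρ z * (Mh * |f (x - κ • z)|)) := by
          have := h0 z
          gcongr
          · exact h_diff hh hM0 hM hκ x z
          · exact hM _ _
      _ = _ := by unfold PhiA; ring
  rw [integral_const_mul, abs_mul, abs_of_pos hκ, mul_assoc] at key3
  exact le_of_mul_le_mul_left key3 hκ

lemma Tc_cont {ρ h f : (Fin 2 → ℝ) → ℝ} (hρ : Continuous ρ) (hs : HasCompactSupport ρ)
    (hh : Continuous h) (hph : Per h) (hf : ContDiff ℝ 1 f) (hpf : Per f) (κ : ℝ) (α : Fin 2) :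
    Continuous (Tc ρ κ h α f) := by
  have hp := pd2_cont hf α
  have hpp := pd2_per hpf α
  have p2 : Per (fun y => h y * pd2 α f y) := fun x k => by simp only [hph x k, hpp x k]
  have := mo_cont hρ hs κ hpp hp
  have := mo_cont hρ hs κ p2 (by fun_prop)
  unfold Tc
  fun_prop

lemma Tc_per {h f : (Fin 2 → ℝ) → ℝ} (ρ : (Fin 2 → ℝ) → ℝ)
    (hph : Per h) (hpf : Per f) (κ : ℝ) (α : Fin 2) : Per (Tc ρ κ h α f) := by
  have hpp := pd2_per hpf α
  have p2 : Per (fun y => h y * pd2 α f y) := fun x k => by simp only [hph x k, hpp x k]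
  intro x k
  unfold Tc
  rw [mo_per ρ κ p2 x k, mo_per ρ κ hpp x k, hph x k]

lemma Tc_A {ρ h f : (Fin 2 → ℝ) → ℝ} (hρ : ContDiff ℝ 1 ρ) (hs : HasCompactSupport ρ)
    (h0 : ∀ z, 0 ≤ ρ z) (hh : ContDiff ℝ 1 h) (hph : Per h) (hf : ContDiff ℝ 1 f) (hpf : Per f)
    {κ : ℝ} (hκ : 0 < κ)
    (α : Fin 2) {Mh : ℝ} (hM0 : 0 ≤ Mh) (hM : ∀ x i, |pd2 i h x| ≤ Mh) :
    ∫ x in TCube, Tc ρ κ h α f x ^ 2 ≤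
      Mh ^ 2 * (∫ z, PhiA ρ α z) ^ 2 * ∫ x in TCube, f x ^ 2 := by
  apply young (PhiA_cont hρ α) (PhiA_cs hs α) _ hpf hf.continuous
    (Tc_cont hρ.continuous hs hh.continuous hph hf hpf κ α) κ Mh
  · exact Tc_pt hρ hs h0 hh hf hκ α hM0 hM
  · intro z
    have := h0 z
    unfold PhiA
    positivity

lemma Tc_contDiff {ρ h f : (Fin 2 → ℝ) → ℝ} (hρ : Continuous ρ) (hs : HasCompactSupport ρ)
    (hh : ContDiff ℝ 1 h) (hph : Per h) (hf : ContDiff ℝ 2 f) (hpf : Per f) (κ : ℝ) (α : Fin 2) :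
    ContDiff ℝ 1 (Tc ρ κ h α f) := by
  have c1 : ContDiff ℝ 1 (pd2 α f) :=
    (hf.fderiv_right (m := 1) (by norm_num)).clm_apply contDiff_const
  have hpp := pd2_per hpf α
  have p2 : Per (fun y => h y * pd2 α f y) := fun x k => by simp only [hph x k, hpp x k]
  have a1 := mo_contDiff hρ hs κ 1 _ _ hpp (by exact_mod_cast c1)
  have a2 := mo_contDiff hρ hs κ 1 _ _ p2 (by exact_mod_cast hh.mul c1)
  exact_mod_cast a2.sub ((show ContDiff ℝ ((1 : ℕ) : WithTop ℕ∞) h by exact_mod_cast hh).mul a1)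

lemma pd2_mul {u v : (Fin 2 → ℝ) → ℝ} (hu : ContDiff ℝ 1 u) (hv : ContDiff ℝ 1 v) (j : Fin 2)
    (x : Fin 2 → ℝ) : pd2 j (fun y => u y * v y) x = pd2 j u x * v x + u x * pd2 j v x := by
  unfold pd2
  rw [fderiv_fun_mul (hu.differentiable (by simp) x) (hv.differentiable (by simp) x)]
  simp
  ring

lemma pd2_comm {f : (Fin 2 → ℝ) → ℝ} (hf : ContDiff ℝ 2 f) (i j : Fin 2) :
    pd2 i (pd2 j f) = pd2 j (pd2 i f) := by
  funext x
  have hd : DifferentiableAt ℝ (fderiv ℝ f) x :=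
    (hf.fderiv_right (m := 1) (by norm_num)).differentiable (by simp) x
  have e : ∀ i j, pd2 i (pd2 j f) x = fderiv ℝ (fderiv ℝ f) x (Pi.single i 1) (Pi.single j 1) := by
    intro i j
    unfold pd2
    rw [fderiv_clm_apply hd (differentiableAt_const _)]
    simp
  rw [e, e]
  have := (hf.contDiffAt (x := x)).isSymmSndFDerivAt (by simp)
  exact this _ _

lemma Tc_pd2 {ρ h f : (Fin 2 → ℝ) → ℝ} (hρ : Continuous ρ) (hs : HasCompactSupport ρ)
    (hh : ContDiff ℝ 1 h) (hph : Per h) (hf : ContDiff ℝ 2 f) (hpf : Per f) (κ : ℝ) (α j : Fin 2)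
    (x : Fin 2 → ℝ) :
    pd2 j (Tc ρ κ h α f) x = Tc ρ κ h α (pd2 j f) x +
      ∫ z, ρ z * ((pd2 j h (x - κ • z) - pd2 j h x) * pd2 α f (x - κ • z)) := by
  have c1 : ContDiff ℝ 1 (pd2 α f) :=
    (hf.fderiv_right (m := 1) (by norm_num)).clm_apply contDiff_const
  have c1j : ContDiff ℝ 1 (pd2 j f) :=
    (hf.fderiv_right (m := 1) (by norm_num)).clm_apply contDiff_const
  have hpp := pd2_per hpf α
  have p2 : Per (fun y => h y * pd2 α f y) := fun x k => by simp only [hph x k, hpp x k]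
  have a1 : ContDiff ℝ 1 (mo ρ κ (pd2 α f)) := by
    exact_mod_cast mo_contDiff hρ hs κ 1 _ _ hpp (by exact_mod_cast c1)
  have a2 : ContDiff ℝ 1 (mo ρ κ (fun y => h y * pd2 α f y)) := by
    exact_mod_cast mo_contDiff hρ hs κ 1 _ _ p2 (by exact_mod_cast hh.mul c1)
  have e1 : pd2 j (Tc ρ κ h α f) x = pd2 j (mo ρ κ (fun y => h y * pd2 α f y)) x -
      pd2 j (fun y => h y * mo ρ κ (pd2 α f) y) x := by
    unfold pd2 Tc
    rw [fderiv_fun_sub]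
    · rfl
    · exact a2.differentiable (by simp) x
    · exact (hh.mul a1).differentiable (by simp) x
  have k1 := pd2_cont hh j
  have k2 := c1.continuous
  have k3 := hh.continuous
  have k4 := pd2_cont c1 j
  rw [e1, pd2_mul hh a1, mo_pd2 hρ hs κ p2 (hh.mul c1), mo_pd2 hρ hs κ hpp c1,
    Tc_int hρ hs hh.continuous c1j, pd2_comm hf α j]
  unfold mo
  rw [← integral_const_mul, ← integral_const_mul, ← integral_add, ← integral_add, ← integral_sub]
  · congr 1
    funext z
    rw [pd2_mul hh c1]
    simp only [smul_eq_mul]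
    ring
  · apply cs_int hρ hs
    have : pd2 j (fun y => h y * pd2 α f y) = fun y => pd2 j h y * pd2 α f y + h y * pd2 j (pd2 α f) y := by
      funext y; exact pd2_mul hh c1 j y
    rw [this]
    fun_prop
  · exact ((cs_int hρ hs (by fun_prop)).const_mul _).add ((cs_int hρ hs (by fun_prop)).const_mul _)
  · simpa only [mul_assoc] using cs_int' hρ hs (v := fun z => (h (x - κ • z) - h x) * pd2 j (pd2 α f) (x - κ • z)) (by fun_prop)
  · exact cs_int' hρ hs (by fun_prop)
  · exact ((cs_int hρ hs (by fun_prop)).const_mul _)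
  · exact ((cs_int hρ hs (by fun_prop)).const_mul _)

lemma Tc_B {ρ h f : (Fin 2 → ℝ) → ℝ} (hρ : ContDiff ℝ 1 ρ) (hs : HasCompactSupport ρ)
    (h0 : ∀ z, 0 ≤ ρ z) (hρ1 : ∫ z, ρ z = 1) (hh : ContDiff ℝ 1 h) (hph : Per h)
    (hf : ContDiff ℝ 2 f) (hpf : Per f) {κ : ℝ} (hκ : 0 < κ)
    (α j : Fin 2) {Mh : ℝ} (hM0 : 0 ≤ Mh) (hM : ∀ x i, |pd2 i h x| ≤ Mh) :
    ∫ x in TCube, pd2 j (Tc ρ κ h α f) x ^ 2 ≤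
      2 * (Mh ^ 2 * (∫ z, PhiA ρ α z) ^ 2 * ∫ x in TCube, pd2 j f x ^ 2) +
      2 * (4 * Mh ^ 2 * ∫ x in TCube, pd2 α f x ^ 2) := by
  have cρ := hρ.continuous
  have c1 : ContDiff ℝ 1 (pd2 α f) :=
    (hf.fderiv_right (m := 1) (by norm_num)).clm_apply contDiff_const
  have c1j : ContDiff ℝ 1 (pd2 j f) :=
    (hf.fderiv_right (m := 1) (by norm_num)).clm_apply contDiff_const
  set G : (Fin 2 → ℝ) → ℝ := fun x =>
    ∫ z, ρ z * ((pd2 j h (x - κ • z) - pd2 j h x) * pd2 α f (x - κ • z)) with hG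
  have e := Tc_pd2 cρ hs hh hph hf hpf κ α j
  have cT : Continuous (Tc ρ κ h α (pd2 j f)) :=
    Tc_cont cρ hs hh.continuous hph c1j (pd2_per hpf j) κ α
  have cP : Continuous (pd2 j (Tc ρ κ h α f)) := pd2_cont (Tc_contDiff cρ hs hh hph hf hpf κ α) j
  have cG : Continuous G := by
    have : G = fun x => pd2 j (Tc ρ κ h α f) x - Tc ρ κ h α (pd2 j f) x := by
      funext x; rw [e x]; simp [hG]
    rw [this]; fun_prop
  have k1 := pd2_cont hh j
  have k2 := c1.continuous
  have hA := Tc_A hρ hs h0 hh hph c1j (pd2_per hpf j) hκ α hM0 hM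
  have hB : ∫ x in TCube, G x ^ 2 ≤ (2 * Mh) ^ 2 * (∫ z, ρ z) ^ 2 * ∫ x in TCube, pd2 α f x ^ 2 := by
    apply young cρ hs h0 (pd2_per hpf α) c1.continuous cG κ (2 * Mh)
    intro x
    rw [← integral_const_mul]
    refine (abs_integral_le_integral_abs).trans ?_
    apply integral_mono (cs_int' cρ hs (by fun_prop)).abs ((cs_int' cρ hs (by fun_prop)).const_mul _)
    intro z
    simp only [abs_mul, abs_of_nonneg (h0 z)]
    have b1 : |pd2 j h (x - κ • z) - pd2 j h x| ≤ 2 * Mh :=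
      (abs_sub _ _).trans (by linarith [hM (x - κ • z) j, hM x j])
    have := h0 z
    calc ρ z * (|pd2 j h (x - κ • z) - pd2 j h x| * |pd2 α f (x - κ • z)|) ≤
        ρ z * ((2 * Mh) * |pd2 α f (x - κ • z)|) := by gcongr
      _ = _ := by ring
  rw [hρ1] at hB
  calc ∫ x in TCube, pd2 j (Tc ρ κ h α f) x ^ 2 ≤
      ∫ x in TCube, (2 * Tc ρ κ h α (pd2 j f) x ^ 2 + 2 * G x ^ 2) := by
        apply setIntegral_mono (tcube_intble (by fun_prop)) (tcube_intble (by fun_prop))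
        intro x
        simp only [e x]
        nlinarith [sq_nonneg (Tc ρ κ h α (pd2 j f) x - G x)]
    _ = 2 * (∫ x in TCube, Tc ρ κ h α (pd2 j f) x ^ 2) + 2 * ∫ x in TCube, G x ^ 2 := by
        rw [integral_add (tcube_intble (by fun_prop)) (tcube_intble (by fun_prop)),
          integral_const_mul, integral_const_mul]
    _ ≤ _ := by linarith

/-- Fourier multiplier of the mollifier -/
def mult (ρ : (Fin 2 → ℝ) → ℝ) (ε : ℝ) (k : Fin 2 → ℤ) : ℂ := ∫ z, ρ z • ex k (ε • z)

lemma fCoeff_mo {ρ g : (Fin 2 → ℝ) → ℝ} (hρ : Continuous ρ) (hs : HasCompactSupport ρ)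
    (hg : Continuous g) (hp : Per g) (ε : ℝ) (k : Fin 2 → ℤ) :
    fCoeff (mo ρ ε g) k = mult ρ ε k * fCoeff g k := by
  have ce := ex_cont k
  have hper : Per (fun x => (g x : ℂ) * ex k x) := fun x l => by simp only [hp x l, ex_per k x l]
  have e : ∀ x, ((mo ρ ε g x : ℝ) : ℂ) * ex k x =
      ∫ z, (ρ z • ex k (ε • z)) * ((g (x - ε • z) : ℂ) * ex k (x - ε • z)) := by
    intro x
    unfold mo
    rw [← integral_complex_ofReal, ← integral_mul_const]
    congr 1
    funext z
    have : ex k x = ex k (ε • z) * ex k (x - ε • z) := by rw [← ex_add]; congr 1; abel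
    rw [this]
    simp
    ring
  rw [fCoeff_eq]
  simp_rw [e]
  rw [integral_integral_swap]
  · have : ∀ z, ∫ x in TCube, (ρ z • ex k (ε • z)) * ((g (x - ε • z) : ℂ) * ex k (x - ε • z)) =
        (ρ z • ex k (ε • z)) * fCoeff g k := by
      intro z
      rw [integral_const_mul]
      congr 1
      have := tcube_shift hper (-(ε • z))
      simp only [← sub_eq_add_neg] at this
      exact this
    simp_rw [this]
    rw [integral_mul_const]
    rfl
  · obtain ⟨M, hM0, hM⟩ := per_bdd hper (by fun_prop)
    have i3 := (hρ.integrable_of_hasCompactSupport hs (μ := volume)).norm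
    apply Integrable.mono' ((i3.comp_snd (volume.restrict TCube)).mul_const M)
    · apply Continuous.aestronglyMeasurable
      fun_prop
    · refine Filter.Eventually.of_forall fun p => ?_
      simp only [Function.uncurry]
      rw [norm_mul, norm_smul, ex_norm, mul_one]
      exact mul_le_mul_of_nonneg_left (hM _) (norm_nonneg _)

lemma mult_le_one {ρ : (Fin 2 → ℝ) → ℝ} 
    (h0 : ∀ z, 0 ≤ ρ z) (hρ1 : ∫ z, ρ z = 1) (ε : ℝ) (k : Fin 2 → ℤ) : ‖mult ρ ε k‖ ≤ 1 := by
  unfold mult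
  refine (norm_integral_le_integral_norm _).trans ?_
  simp only [norm_smul, ex_norm, mul_one, Real.norm_of_nonneg (h0 _), hρ1, le_refl]

lemma mult_sub {ρ : (Fin 2 → ℝ) → ℝ} (hρ : Continuous ρ) (hs : HasCompactSupport ρ)
    (h0 : ∀ z, 0 ≤ ρ z) (hρ1 : ∫ z, ρ z = 1) {ε : ℝ} (hε : 0 ≤ ε) (k : Fin 2 → ℤ) :
    ‖1 - mult ρ ε k‖ ≤ (2 * Real.pi * ∫ z, ρ z * ‖z‖) * (ε * (|(k 0 : ℝ)| + |(k 1 : ℝ)|)) := by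
  have ce := ex_cont k
  have e : 1 - mult ρ ε k = ∫ z, ρ z • (1 - ex k (ε • z)) := by
    unfold mult
    simp_rw [smul_sub]
    rw [integral_sub (cs_int hρ hs (by fun_prop)) (cs_int hρ hs (by fun_prop)),
      integral_smul_const, hρ1, one_smul]
  rw [e]
  refine (norm_integral_le_integral_norm _).trans ?_
  have : (2 * Real.pi * ∫ z, ρ z * ‖z‖) * (ε * (|(k 0 : ℝ)| + |(k 1 : ℝ)|)) =
      ∫ z, (2 * Real.pi * (ε * (|(k 0 : ℝ)| + |(k 1 : ℝ)|))) * (ρ z * ‖z‖) := by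
    rw [integral_const_mul]; ring
  rw [this]
  apply integral_mono (cs_int hρ hs (by fun_prop)).norm
    ((cs_int' hρ hs (by fun_prop)).const_mul _)
  intro z
  simp only [norm_smul, Real.norm_of_nonneg (h0 _)]
  have b : ‖1 - ex k (ε • z)‖ ≤ 2 * Real.pi * (ε * (|(k 0 : ℝ)| + |(k 1 : ℝ)|)) * ‖z‖ := by
    rw [norm_sub_rev]
    unfold ex
    rw [← Complex.ofReal_neg, mul_comm]
    refine (Real.norm_exp_I_mul_ofReal_sub_one_le).trans ?_
    rw [norm_neg, norm_mul, Real.norm_of_nonneg (by positivity), mul_assoc (2 * Real.pi)]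
    gcongr
    simp only [Fin.sum_univ_two, Pi.smul_apply, smul_eq_mul]
    have n0 : |z 0| ≤ ‖z‖ := norm_le_pi_norm z 0
    have n1 : |z 1| ≤ ‖z‖ := norm_le_pi_norm z 1
    calc ‖(k 0 : ℝ) * (ε * z 0) + (k 1 : ℝ) * (ε * z 1)‖ ≤
        |(k 0 : ℝ)| * (ε * |z 0|) + |(k 1 : ℝ)| * (ε * |z 1|) := by
          refine (abs_add_le _ _).trans (le_of_eq ?_)
          simp only [abs_mul, abs_of_nonneg hε]
      _ ≤ |(k 0 : ℝ)| * (ε * ‖z‖) + |(k 1 : ℝ)| * (ε * ‖z‖) := by gcongr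
      _ = _ := by ring
  calc ρ z * ‖1 - ex k (ε • z)‖ ≤ ρ z * (2 * Real.pi * (ε * (|(k 0 : ℝ)| + |(k 1 : ℝ)|)) * ‖z‖) :=
        mul_le_mul_of_nonneg_left b (h0 z)
    _ = _ := by ring

lemma mult_decay {ρ : (Fin 2 → ℝ) → ℝ} (hρ : ContDiff ℝ 1 ρ) (hs : HasCompactSupport ρ)
    {ε : ℝ} (hε : 0 ≤ ε) (k : Fin 2 → ℤ) (j : Fin 2) :
    ε * |(k j : ℝ)| * ‖mult ρ ε k‖ ≤ ∫ z, |pd2 j ρ z| := by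
  have ce := ex_cont k
  have cρ := hρ.continuous
  have cp := pd2_cont hρ j
  have hd : ∀ z, HasFDerivAt (fun z => ex k (ε • z)) (ε • fderiv ℝ (ex k) (ε • z)) z := by
    intro z
    have h1 : HasFDerivAt (fun z : Fin 2 → ℝ => ε • z)
        (ε • ContinuousLinearMap.id ℝ (Fin 2 → ℝ)) z := (hasFDerivAt_id z).const_smul ε
    refine (((ex_contDiff k).differentiable (by simp) (ε • z)).hasFDerivAt.comp z h1).congr_fderiv ?_
    ext v
    simp
  have ef : ∀ z, fderiv ℝ (fun z => ex k (ε • z)) z (Pi.single j 1) =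
      (-(2 * Real.pi * (k j) * Complex.I) * ε) * ex k (ε • z) := by
    intro z
    rw [(hd z).fderiv, smul_apply, ex_fderiv, Complex.real_smul]
    ring
  have ibp := integral_smul_fderiv_eq_neg_fderiv_smul_of_integrable (𝕜 := ℝ)
    (μ := (volume : Measure (Fin 2 → ℝ))) (f := ρ) (g := fun z => ex k (ε • z))
    (v := Pi.single j 1)
    (cs_int cp (pd2_cs hs j) (by fun_prop))
    (by simp_rw [ef]; exact cs_int cρ hs (by fun_prop))
    (cs_int cρ hs (by fun_prop)) (fun z _ => hρ.differentiable (by simp) z)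
    (fun z _ => (hd z).differentiableAt)
  simp_rw [ef] at ibp
  have e : ∀ z, ρ z • ((-(2 * Real.pi * (k j) * Complex.I) * ε) * ex k (ε • z)) =
      (-(2 * Real.pi * (k j) * Complex.I) * ε) * (ρ z • ex k (ε • z)) := by
    intro z; simp only [Complex.real_smul]; ring
  simp_rw [e] at ibp
  rw [integral_const_mul] at ibp
  have n := congrArg norm ibp
  rw [norm_neg, norm_mul] at n
  have n2 : ‖∫ z, (fderiv ℝ ρ z (Pi.single j 1)) • ex k (ε • z)‖ ≤ ∫ z, |pd2 j ρ z| := by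
    refine (norm_integral_le_integral_norm _).trans ?_
    simp only [norm_smul, ex_norm, mul_one]
    exact le_rfl
  rw [← n] at n2
  have n3 : ‖(-(2 * Real.pi * (k j) * Complex.I) * ε : ℂ)‖ = 2 * Real.pi * (ε * |(k j : ℝ)|) := by
    simp [abs_of_nonneg hε, abs_of_pos Real.pi_pos]
    ring
  rw [n3] at n2
  refine le_trans ?_ n2
  show _ ≤ 2 * Real.pi * (ε * |(k j : ℝ)|) * ‖mult ρ ε k‖
  have : 1 ≤ 2 * Real.pi := by linarith [Real.pi_gt_three]
  rw [mul_assoc (2 * Real.pi)]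
  exact le_mul_of_one_le_left (by positivity) this

/-- Fourier weight -/
def wt (k : Fin 2 → ℤ) : ℝ := (1:ℝ) + ∑ i, ((k i : ℝ))^2

lemma wt_one (k : Fin 2 → ℤ) : 1 ≤ wt k := by
  unfold wt
  have : 0 ≤ ∑ i, ((k i : ℝ))^2 := Finset.sum_nonneg fun i _ => sq_nonneg _
  linarith

/-- weighted sums of squares of the Fourier coefficients -/
def SW (w : (Fin 2 → ℤ) → ℝ) (f : (Fin 2 → ℝ) → ℝ) : ENNReal :=
  ∑' k, ENNReal.ofReal (w k * ‖fCoeff f k‖ ^ 2)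

lemma hs_toReal (s : ℝ) (f : (Fin 2 → ℝ) → ℝ) :
    hsNormSq s f = (SW (fun k => wt k ^ s) f).toReal := by
  unfold SW hsNormSq
  rw [ENNReal.tsum_toReal_eq (fun _ => ENNReal.ofReal_ne_top)]
  congr 1
  funext k
  rw [ENNReal.toReal_ofReal]
  · rfl
  · have := wt_one k
    positivity

lemma SW_mono {w v : (Fin 2 → ℤ) → ℝ} {f g : (Fin 2 → ℝ) → ℝ}
    (h : ∀ k, w k * ‖fCoeff f k‖ ^ 2 ≤ v k * ‖fCoeff g k‖ ^ 2) : SW w f ≤ SW v g :=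
  ENNReal.tsum_le_tsum fun k => ENNReal.ofReal_le_ofReal (h k)

lemma SW_const_mul {c : ℝ} (hc : 0 ≤ c) (w : (Fin 2 → ℤ) → ℝ) (f : (Fin 2 → ℝ) → ℝ) :
    SW (fun k => c * w k) f = ENNReal.ofReal c * SW w f := by
  unfold SW
  rw [← ENNReal.tsum_mul_left]
  congr 1
  funext k
  rw [mul_assoc, ENNReal.ofReal_mul hc]

lemma SW_zero {f : (Fin 2 → ℝ) → ℝ} (hf : Per f) (hc : Continuous f) :
    SW (fun _ => 1) f = ENNReal.ofReal (∫ x in TCube, f x ^ 2) := by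
  have h := parseval hf hc
  unfold SW
  simp only [one_mul]
  rw [← h.tsum_eq, ENNReal.ofReal_tsum_of_nonneg (fun k => by positivity) h.summable]

lemma SW_one {f : (Fin 2 → ℝ) → ℝ} (hf : Per f) (hc : ContDiff ℝ 1 f) :
    SW wt f = ENNReal.ofReal ((∫ x in TCube, f x ^ 2) + (4 * Real.pi ^ 2)⁻¹ *
      ((∫ x in TCube, pd2 0 f x ^ 2) + ∫ x in TCube, pd2 1 f x ^ 2)) := by
  have h := parseval hf hc.continuous
  have h0 := parseval (pd2_per hf 0) (pd2_cont hc 0)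
  have h1 := parseval (pd2_per hf 1) (pd2_cont hc 1)
  have H := h.add ((h0.add h1).mul_left (4 * Real.pi ^ 2)⁻¹)
  have e : ∀ k, ‖fCoeff f k‖ ^ 2 + (4 * Real.pi ^ 2)⁻¹ * (‖fCoeff (pd2 0 f) k‖ ^ 2 +
      ‖fCoeff (pd2 1 f) k‖ ^ 2) = wt k * ‖fCoeff f k‖ ^ 2 := by
    intro k
    have n3 : ∀ j, ‖(2 * Real.pi * (k j) * Complex.I : ℂ)‖ = 2 * Real.pi * |(k j : ℝ)| := by
      intro j
      simp [abs_of_pos Real.pi_pos]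
    rw [fCoeff_pd2 hf hc, fCoeff_pd2 hf hc, norm_mul _ (fCoeff f k), norm_mul _ (fCoeff f k), n3, n3]
    unfold wt
    have := Real.pi_pos
    simp only [mul_pow, sq_abs, Fin.sum_univ_two]
    field_simp
    ring
  simp only [e] at H
  unfold SW
  rw [← H.tsum_eq, ENNReal.ofReal_tsum_of_nonneg (fun k => ?_) H.summable]
  have := wt_one k
  positivity

lemma Tc_S0 {ρ h f : (Fin 2 → ℝ) → ℝ} (hρ : ContDiff ℝ 1 ρ) (hs : HasCompactSupport ρ)
    (h0 : ∀ z, 0 ≤ ρ z) (hh : ContDiff ℝ 1 h) (hph : Per h)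
    (hf : ContDiff ℝ 2 f) (hpf : Per f) {κ : ℝ} (hκ : 0 < κ)
    (α : Fin 2) {Mh : ℝ} (hM0 : 0 ≤ Mh) (hM : ∀ x i, |pd2 i h x| ≤ Mh) :
    SW (fun _ => 1) (Tc ρ κ h α f) ≤
      ENNReal.ofReal ((2 * (∫ z, PhiA ρ α z) ^ 2 + 16) * Mh ^ 2) * SW (fun _ => 1) f := by
  have hf1 : ContDiff ℝ 1 f := hf.of_le (by norm_num)
  rw [SW_zero hpf hf.continuous, SW_zero (Tc_per ρ hph hpf κ α)
    (Tc_cont hρ.continuous hs hh.continuous hph hf1 hpf κ α), ← ENNReal.ofReal_mul (by positivity)]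
  apply ENNReal.ofReal_le_ofReal
  refine (Tc_A hρ hs h0 hh hph hf1 hpf hκ α hM0 hM).trans ?_
  apply mul_le_mul_of_nonneg_right _ (integral_nonneg fun x => sq_nonneg _)
  nlinarith [sq_nonneg (∫ z, PhiA ρ α z), sq_nonneg Mh, sq_nonneg (Mh * ∫ z, PhiA ρ α z)]

lemma Tc_S1 {ρ h f : (Fin 2 → ℝ) → ℝ} (hρ : ContDiff ℝ 1 ρ) (hs : HasCompactSupport ρ)
    (h0 : ∀ z, 0 ≤ ρ z) (hρ1 : ∫ z, ρ z = 1) (hh : ContDiff ℝ 1 h) (hph : Per h)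
    (hf : ContDiff ℝ 2 f) (hpf : Per f) {κ : ℝ} (hκ : 0 < κ)
    (α : Fin 2) {Mh : ℝ} (hM0 : 0 ≤ Mh) (hM : ∀ x i, |pd2 i h x| ≤ Mh) :
    SW wt (Tc ρ κ h α f) ≤
      ENNReal.ofReal ((2 * (∫ z, PhiA ρ α z) ^ 2 + 16) * Mh ^ 2) * SW wt f := by
  have hf1 : ContDiff ℝ 1 f := hf.of_le (by norm_num)
  rw [SW_one hpf hf1, SW_one (Tc_per ρ hph hpf κ α)
    (Tc_contDiff hρ.continuous hs hh hph hf hpf κ α), ← ENNReal.ofReal_mul (by positivity)]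
  apply ENNReal.ofReal_le_ofReal
  have hA := Tc_A hρ hs h0 hh hph hf1 hpf hκ α hM0 hM
  have hB0 := Tc_B hρ hs h0 hρ1 hh hph hf hpf hκ α 0 hM0 hM
  have hB1 := Tc_B hρ hs h0 hρ1 hh hph hf hpf hκ α 1 hM0 hM
  have n : ∀ u : (Fin 2 → ℝ) → ℝ, 0 ≤ ∫ x in TCube, u x ^ 2 :=
    fun u => integral_nonneg fun x => sq_nonneg _
  have hα : ∫ x in TCube, pd2 α f x ^ 2 ≤
      (∫ x in TCube, pd2 0 f x ^ 2) + ∫ x in TCube, pd2 1 f x ^ 2 := by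
    have := n (pd2 0 f)
    have := n (pd2 1 f)
    fin_cases α
    · simp; linarith
    · simp; linarith
  have a0 := n f
  have a1 := n (pd2 0 f)
  have a2 := n (pd2 1 f)
  generalize (∫ x in TCube, f x ^ 2) = X at *
  generalize (∫ x in TCube, pd2 0 f x ^ 2) = Y0 at *
  generalize (∫ x in TCube, pd2 1 f x ^ 2) = Y1 at *
  generalize (∫ x in TCube, pd2 α f x ^ 2) = Ya at *
  generalize (∫ z, PhiA ρ α z) = P at *
  generalize (∫ x in TCube, Tc ρ κ h α f x ^ 2) = TX at *
  generalize (∫ x in TCube, pd2 0 (Tc ρ κ h α f) x ^ 2) = T0 at *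
  generalize (∫ x in TCube, pd2 1 (Tc ρ κ h α f) x ^ 2) = T1 at *
  have hi : 0 ≤ (4 * Real.pi ^ 2)⁻¹ := by positivity
  generalize (4 * Real.pi ^ 2)⁻¹ = q at *
  have s1 : TX ≤ (2 * P ^ 2 + 16) * Mh ^ 2 * X := by
    refine hA.trans ?_
    apply mul_le_mul_of_nonneg_right _ a0
    nlinarith [sq_nonneg P, sq_nonneg Mh, sq_nonneg (Mh * P)]
  have s2 : T0 + T1 ≤ (2 * P ^ 2 + 16) * Mh ^ 2 * (Y0 + Y1) := by
    have : Mh ^ 2 * Ya ≤ Mh ^ 2 * (Y0 + Y1) := by gcongr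
    nlinarith
  nlinarith [mul_le_mul_of_nonneg_left s2 hi]

lemma Tc_sub {ρ h f g : (Fin 2 → ℝ) → ℝ} (hρ : Continuous ρ) (hs : HasCompactSupport ρ)
    (hh : Continuous h) (hf : ContDiff ℝ 1 f) (hg : ContDiff ℝ 1 g) (κ : ℝ) (α : Fin 2)
    (x : Fin 2 → ℝ) :
    Tc ρ κ h α (fun y => f y - g y) x = Tc ρ κ h α f x - Tc ρ κ h α g x := by
  have h1 := pd2_cont hf α
  have h2 := pd2_cont hg α
  rw [Tc_int hρ hs hh hf, Tc_int hρ hs hh hg, Tc_int hρ hs hh (hf.sub hg), ← integral_sub]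
  · congr 1
    funext z
    have : pd2 α (fun y => f y - g y) (x - κ • z) = pd2 α f (x - κ • z) - pd2 α g (x - κ • z) := by
      unfold pd2
      rw [fderiv_fun_sub (hf.differentiable (by simp) _) (hg.differentiable (by simp) _)]
      rfl
    rw [this]
    ring
  · simpa only [mul_assoc] using cs_int' hρ hs (v := fun z => (h (x - κ • z) - h x) * pd2 α f (x - κ • z)) (by fun_prop)
  · simpa only [mul_assoc] using cs_int' hρ hs (v := fun z => (h (x - κ • z) - h x) * pd2 α g (x - κ • z)) (by fun_prop)

lemma fCoeff_sub {f g : (Fin 2 → ℝ) → ℝ} (hf : Continuous f) (hg : Continuous g) (k : Fin 2 → ℤ) :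
    fCoeff (fun y => f y - g y) k = fCoeff f k - fCoeff g k := by
  have := ex_cont k
  simp only [fCoeff_eq]
  rw [← integral_sub (tcube_intble (by fun_prop)) (tcube_intble (by fun_prop))]
  congr 1
  funext x
  push_cast
  ring

/-- constant in the decomposition of `g` -/
def Dc (ρ : (Fin 2 → ℝ) → ℝ) : ℝ :=
  5 + 2 * (2 * Real.pi * ∫ z, ρ z * ‖z‖) ^ 2 + (∫ z, |pd2 0 ρ z|) ^ 2 + (∫ z, |pd2 1 ρ z|) ^ 2

lemma Dc_pos (ρ : (Fin 2 → ℝ) → ℝ) : 5 ≤ Dc ρ := by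
  unfold Dc
  nlinarith [sq_nonneg (2 * Real.pi * ∫ z, ρ z * ‖z‖), sq_nonneg (∫ z, |pd2 0 ρ z|),
    sq_nonneg (∫ z, |pd2 1 ρ z|)]

lemma mult_low {ρ : (Fin 2 → ℝ) → ℝ} (hρ : ContDiff ℝ 1 ρ) (hs : HasCompactSupport ρ)
    (h0 : ∀ z, 0 ≤ ρ z) (hρ1 : ∫ z, ρ z = 1) {t : ℝ} (ht : 0 < t) (k : Fin 2 → ℤ) :
    ‖1 - mult ρ (√t) k‖ ^ 2 ≤ Dc ρ * min 1 (t * wt k) := by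
  have hD := Dc_pos ρ
  have hw := wt_one k
  rw [mul_min_of_nonneg _ _ (by linarith)]
  apply le_min
  · have h1 : ‖1 - mult ρ (√t) k‖ ≤ 2 := by
      refine (norm_sub_le _ _).trans ?_
      rw [norm_one]
      linarith [mult_le_one h0 hρ1 (√t) k]
    nlinarith [norm_nonneg (1 - mult ρ (√t) k)]
  · have h2 := mult_sub hρ.continuous hs h0 hρ1 (Real.sqrt_nonneg t) k
    have h3 := pow_le_pow_left₀ (norm_nonneg _) h2 2
    refine h3.trans ?_
    rw [mul_pow _ (√t * _), mul_pow (√t), Real.sq_sqrt ht.le]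
    have h4 : (|(k 0 : ℝ)| + |(k 1 : ℝ)|) ^ 2 ≤ 2 * wt k := by
      unfold wt
      rw [Fin.sum_univ_two]
      nlinarith [sq_abs (k 0 : ℝ), sq_abs (k 1 : ℝ), sq_nonneg (|(k 0 : ℝ)| - |(k 1 : ℝ)|)]
    have h5 : 2 * (2 * Real.pi * ∫ z, ρ z * ‖z‖) ^ 2 ≤ Dc ρ := by
      unfold Dc
      nlinarith [sq_nonneg (∫ z, |pd2 0 ρ z|), sq_nonneg (∫ z, |pd2 1 ρ z|)]
    calc (2 * Real.pi * ∫ z, ρ z * ‖z‖) ^ 2 * (t * (|(k 0 : ℝ)| + |(k 1 : ℝ)|) ^ 2) ≤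
        (2 * Real.pi * ∫ z, ρ z * ‖z‖) ^ 2 * (t * (2 * wt k)) := by gcongr
      _ = 2 * (2 * Real.pi * ∫ z, ρ z * ‖z‖) ^ 2 * (t * wt k) := by ring
      _ ≤ _ := by gcongr

lemma mult_high {ρ : (Fin 2 → ℝ) → ℝ} (hρ : ContDiff ℝ 1 ρ) (hs : HasCompactSupport ρ)
    (h0 : ∀ z, 0 ≤ ρ z) (hρ1 : ∫ z, ρ z = 1) {t : ℝ} (ht : 0 < t) (ht1 : t ≤ 1) (k : Fin 2 → ℤ) :
    t * wt k * ‖mult ρ (√t) k‖ ^ 2 ≤ Dc ρ * min 1 (t * wt k) := by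
  have hD := Dc_pos ρ
  have hw := wt_one k
  have hm := mult_le_one h0 hρ1 (√t) k
  have hm2 : ‖mult ρ (√t) k‖ ^ 2 ≤ 1 := pow_le_one₀ (norm_nonneg _) hm
  rw [mul_min_of_nonneg _ _ (by linarith)]
  apply le_min
  · have d : ∀ j, t * (k j : ℝ) ^ 2 * ‖mult ρ (√t) k‖ ^ 2 ≤ (∫ z, |pd2 j ρ z|) ^ 2 := by
      intro j
      have := pow_le_pow_left₀ (by positivity) (mult_decay hρ hs (Real.sqrt_nonneg t) k j) 2
      rwa [mul_pow, mul_pow, Real.sq_sqrt ht.le, sq_abs] at this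
    have d0 := d 0
    have d1 := d 1
    have e : t * wt k * ‖mult ρ (√t) k‖ ^ 2 = t * ‖mult ρ (√t) k‖ ^ 2 +
      t * (k 0 : ℝ) ^ 2 * ‖mult ρ (√t) k‖ ^ 2 + t * (k 1 : ℝ) ^ 2 * ‖mult ρ (√t) k‖ ^ 2 := by
      unfold wt
      rw [Fin.sum_univ_two]
      ring
    rw [e]
    have : t * ‖mult ρ (√t) k‖ ^ 2 ≤ 1 := mul_le_one₀ ht1 (by positivity) hm2
    unfold Dc
    nlinarith [sq_nonneg (2 * Real.pi * ∫ z, ρ z * ‖z‖)]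
  · have : 0 ≤ t * wt k := by positivity
    nlinarith

lemma SW_add_le {f f0 f1 : (Fin 2 → ℝ) → ℝ} {t : ℝ} (ht : 0 < t)
    (h : ∀ k, fCoeff f k = fCoeff f0 k + fCoeff f1 k) :
    SW (fun k => min 1 (t * wt k)) f ≤ 2 * SW (fun _ => 1) f0 + 2 * (ENNReal.ofReal t * SW wt f1) := by
  have e2 : (2 : ENNReal) = ENNReal.ofReal 2 := by simp
  rw [e2, ← SW_const_mul ht.le, ← SW_const_mul (by norm_num), ← SW_const_mul (by norm_num)]
  unfold SW
  rw [← ENNReal.tsum_add]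
  apply ENNReal.tsum_le_tsum
  intro k
  have hw := wt_one k
  rw [← ENNReal.ofReal_add (by positivity) (by positivity)]
  apply ENNReal.ofReal_le_ofReal
  rw [h k]
  have n : ‖fCoeff f0 k + fCoeff f1 k‖ ^ 2 ≤ 2 * ‖fCoeff f0 k‖ ^ 2 + 2 * ‖fCoeff f1 k‖ ^ 2 := by
    have := pow_le_pow_left₀ (norm_nonneg _) (norm_add_le (fCoeff f0 k) (fCoeff f1 k)) 2
    nlinarith [sq_nonneg (‖fCoeff f0 k‖ - ‖fCoeff f1 k‖)]
  have hm : 0 ≤ min 1 (t * wt k) := le_min zero_le_one (by positivity)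
  calc min 1 (t * wt k) * ‖fCoeff f0 k + fCoeff f1 k‖ ^ 2
      ≤ min 1 (t * wt k) * (2 * ‖fCoeff f0 k‖ ^ 2 + 2 * ‖fCoeff f1 k‖ ^ 2) := by gcongr
    _ = min 1 (t * wt k) * (2 * ‖fCoeff f0 k‖ ^ 2) + min 1 (t * wt k) * (2 * ‖fCoeff f1 k‖ ^ 2) := by
        ring
    _ ≤ 1 * (2 * ‖fCoeff f0 k‖ ^ 2) + (t * wt k) * (2 * ‖fCoeff f1 k‖ ^ 2) := by
        gcongr
        · exact min_le_left _ _
        · exact min_le_right _ _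
    _ = _ := by ring

lemma K_step {ρ h g : (Fin 2 → ℝ) → ℝ} (hρ : ContDiff ℝ 1 ρ) (hs : HasCompactSupport ρ)
    (h0 : ∀ z, 0 ≤ ρ z) (hρ1 : ∫ z, ρ z = 1) (hh : ContDiff ℝ 1 h) (hph : Per h)
    (hg : ContDiff ℝ 2 g) (hpg : Per g) {κ : ℝ} (hκ : 0 < κ)
    (α : Fin 2) {Mh : ℝ} (hM0 : 0 ≤ Mh) (hM : ∀ x i, |pd2 i h x| ≤ Mh)
    {t : ℝ} (ht : 0 < t) (ht1 : t ≤ 1) :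
    SW (fun k => min 1 (t * wt k)) (Tc ρ κ h α g) ≤
      4 * (ENNReal.ofReal ((2 * (∫ z, PhiA ρ α z) ^ 2 + 16) * Mh ^ 2) * ENNReal.ofReal (Dc ρ)) *
        SW (fun k => min 1 (t * wt k)) g := by
  have cρ := hρ.continuous
  have hD := Dc_pos ρ
  set g1 := mo ρ (√t) g with hg1
  have pg1 : Per g1 := mo_per ρ _ hpg
  have cg1 : ContDiff ℝ 2 g1 := by
    exact_mod_cast mo_contDiff cρ hs (√t) 2 _ _ hpg (by exact_mod_cast hg)
  set g0 : (Fin 2 → ℝ) → ℝ := fun y => g y - g1 y with hg0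
  have pg0 : Per g0 := fun x k => by simp only [hg0, hpg x k, pg1 x k]
  have cg0 : ContDiff ℝ 2 g0 := hg.sub cg1
  have l12 : (1 : WithTop ℕ∞) ≤ 2 := by norm_num
  have hT : ∀ k, fCoeff (Tc ρ κ h α g) k = fCoeff (Tc ρ κ h α g0) k + fCoeff (Tc ρ κ h α g1) k := by
    intro k
    have e : Tc ρ κ h α g0 = fun x => Tc ρ κ h α g x - Tc ρ κ h α g1 x := by
      funext x
      exact Tc_sub cρ hs hh.continuous (hg.of_le l12) (cg1.of_le l12) κ α x
    rw [e, fCoeff_sub (Tc_cont cρ hs hh.continuous hph (hg.of_le l12) hpg κ α)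
      (Tc_cont cρ hs hh.continuous hph (cg1.of_le l12) pg1 κ α)]
    ring
  have c0 : SW (fun _ => 1) g0 ≤ ENNReal.ofReal (Dc ρ) * SW (fun k => min 1 (t * wt k)) g := by
    rw [← SW_const_mul (show 0 ≤ Dc ρ by linarith)]
    apply SW_mono
    intro k
    rw [hg0, fCoeff_sub hg.continuous cg1.continuous, hg1, fCoeff_mo cρ hs hg.continuous hpg]
    have : fCoeff g k - mult ρ (√t) k * fCoeff g k = (1 - mult ρ (√t) k) * fCoeff g k := by ring
    rw [this, norm_mul, mul_pow, one_mul]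
    gcongr
    exact mult_low hρ hs h0 hρ1 ht k
  have c1 : ENNReal.ofReal t * SW wt g1 ≤ ENNReal.ofReal (Dc ρ) * SW (fun k => min 1 (t * wt k)) g := by
    rw [← SW_const_mul ht.le, ← SW_const_mul (show 0 ≤ Dc ρ by linarith)]
    apply SW_mono
    intro k
    rw [hg1, fCoeff_mo cρ hs hg.continuous hpg, norm_mul, mul_pow, ← mul_assoc]
    apply mul_le_mul_of_nonneg_right _ (sq_nonneg _)
    exact mult_high hρ hs h0 hρ1 ht ht1 k
  refine (SW_add_le ht hT).trans ?_
  have t0 := Tc_S0 hρ hs h0 hh hph cg0 pg0 hκ α hM0 hM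
  have t1 := Tc_S1 hρ hs h0 hρ1 hh hph cg1 pg1 hκ α hM0 hM
  generalize ENNReal.ofReal ((2 * (∫ z, PhiA ρ α z) ^ 2 + 16) * Mh ^ 2) = c at *
  calc _ ≤ 2 * (c * SW (fun _ => 1) g0) + 2 * (ENNReal.ofReal t * (c * SW wt g1)) := by gcongr
    _ = 2 * c * (SW (fun _ => 1) g0) + 2 * c * (ENNReal.ofReal t * SW wt g1) := by ring
    _ ≤ 2 * c * (ENNReal.ofReal (Dc ρ) * SW (fun k => min 1 (t * wt k)) g) +
        2 * c * (ENNReal.ofReal (Dc ρ) * SW (fun k => min 1 (t * wt k)) g) := by gcongr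
    _ = _ := by ring

/-- the real interpolation weight -/
def Jw (s w : ℝ) : ENNReal :=
  ∫⁻ u in Set.Ioc (0:ℝ) 1, ENNReal.ofReal (u ^ (-s - 1)) * ENNReal.ofReal (min 1 (u * w))

lemma J_low_int {s w : ℝ} (hs1 : s < 1) (hw : 1 ≤ w) :
    ∫⁻ u in Set.Ioc (0:ℝ) w⁻¹, ENNReal.ofReal (u ^ (-s) * w) = ENNReal.ofReal (w ^ s / (1 - s)) := by
  have hw0 : 0 < w := by linarith
  have hi : IntervalIntegrable (fun u : ℝ => u ^ (-s) * w) volume 0 w⁻¹ :=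
    (intervalIntegral.intervalIntegrable_rpow' (by linarith)).mul_const w
  have hi2 := (intervalIntegrable_iff_integrableOn_Ioc_of_le (by positivity)).1 hi
  rw [← ofReal_integral_eq_lintegral_ofReal hi2]
  · rw [← intervalIntegral.integral_of_le (by positivity), intervalIntegral.integral_mul_const,
      integral_rpow (Or.inl (by linarith))]
    congr 1
    rw [Real.zero_rpow (by linarith), Real.inv_rpow hw0.le, ← Real.rpow_neg hw0.le, sub_zero,
      div_mul_eq_mul_div, ← Real.rpow_add_one hw0.ne']
    ring_nf
  · filter_upwards [ae_restrict_mem measurableSet_Ioc] with u hu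
    have := hu.1
    positivity

lemma J_high_int {s w : ℝ} (hs0 : 0 < s) (hw : 1 ≤ w) :
    ∫⁻ u in Set.Ioi (w⁻¹), ENNReal.ofReal (u ^ (-s - 1)) = ENNReal.ofReal (w ^ s / s) := by
  have hw0 : 0 < w := by linarith
  have hi := integrableOn_Ioi_rpow_of_lt (a := -s - 1) (by linarith) (inv_pos.2 hw0)
  rw [← ofReal_integral_eq_lintegral_ofReal hi]
  · rw [integral_Ioi_rpow_of_lt (by linarith) (inv_pos.2 hw0)]
    congr 1
    rw [Real.inv_rpow hw0.le, ← Real.rpow_neg hw0.le]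
    ring_nf
  · filter_upwards [ae_restrict_mem measurableSet_Ioi] with u hu
    have : 0 < u := lt_trans (inv_pos.2 hw0) hu
    positivity

lemma J_low {s w : ℝ} (hs1 : s < 1) (hw : 1 ≤ w) :
    ENNReal.ofReal (w ^ s / (1 - s)) ≤ Jw s w := by
  have hw0 : 0 < w := by linarith
  rw [← J_low_int hs1 hw]
  unfold Jw
  calc _ ≤ ∫⁻ u in Set.Ioc (0:ℝ) w⁻¹,
      ENNReal.ofReal (u ^ (-s - 1)) * ENNReal.ofReal (min 1 (u * w)) := by
        apply setLIntegral_mono' measurableSet_Ioc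
        intro u hu
        have h0 := hu.1
        rw [← ENNReal.ofReal_mul (by positivity)]
        apply ENNReal.ofReal_le_ofReal
        have : u * w ≤ 1 := by
          have := mul_le_mul_of_nonneg_right hu.2 hw0.le
          rwa [inv_mul_cancel₀ hw0.ne'] at this
        rw [min_eq_right this, ← mul_assoc, ← Real.rpow_add_one h0.ne']
        simp
    _ ≤ _ := by
        apply lintegral_mono_set
        exact Set.Ioc_subset_Ioc_right (inv_le_one_of_one_le₀ hw)

lemma J_up {s w : ℝ} (hs0 : 0 < s) (hs1 : s < 1) (hw : 1 ≤ w) :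
    Jw s w ≤ ENNReal.ofReal (1 / (1 - s) + 1 / s) * ENNReal.ofReal (w ^ s) := by
  have hw0 : 0 < w := by linarith
  have e : ENNReal.ofReal (1 / (1 - s) + 1 / s) * ENNReal.ofReal (w ^ s) =
      ENNReal.ofReal (w ^ s / (1 - s)) + ENNReal.ofReal (w ^ s / s) := by
    have : 0 < 1 - s := by linarith
    rw [← ENNReal.ofReal_mul (by positivity), ← ENNReal.ofReal_add (by positivity) (by positivity)]
    ring_nf
  rw [e, ← J_low_int hs1 hw, ← J_high_int hs0 hw]
  unfold Jw
  calc _ ≤ ∫⁻ u in Set.Ioc (0:ℝ) w⁻¹ ∪ Set.Ioi w⁻¹,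
      ENNReal.ofReal (u ^ (-s - 1)) * ENNReal.ofReal (min 1 (u * w)) := by
        apply lintegral_mono_set
        rw [Set.Ioc_union_Ioi_eq_Ioi (by positivity)]
        exact Set.Ioc_subset_Ioi_self
    _ ≤ _ := lintegral_union_le _ _ _
    _ ≤ _ := by
        apply add_le_add
        · apply setLIntegral_mono' measurableSet_Ioc
          intro u hu
          have h0 := hu.1
          rw [← ENNReal.ofReal_mul (by positivity)]
          apply ENNReal.ofReal_le_ofReal
          calc u ^ (-s - 1) * min 1 (u * w) ≤ u ^ (-s - 1) * (u * w) := by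
                gcongr
                exact min_le_right _ _
            _ = u ^ (-s) * w := by
                rw [← mul_assoc, ← Real.rpow_add_one h0.ne']
                simp
        · apply setLIntegral_mono' measurableSet_Ioi
          intro u hu
          calc _ ≤ ENNReal.ofReal (u ^ (-s - 1)) * 1 := by
                gcongr
                rw [ENNReal.ofReal_le_one]
                exact min_le_left _ _
            _ = _ := mul_one _

lemma J_sum (s : ℝ) (f : (Fin 2 → ℝ) → ℝ) :
    ∑' k, Jw s (wt k) * ENNReal.ofReal (‖fCoeff f k‖ ^ 2) =
      ∫⁻ u in Set.Ioc (0:ℝ) 1, ENNReal.ofReal (u ^ (-s - 1)) * SW (fun k => min 1 (u * wt k)) f := by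
  have hm : ∀ k, Measurable fun u : ℝ =>
      ENNReal.ofReal (u ^ (-s - 1)) * ENNReal.ofReal (min 1 (u * wt k)) := by
    intro k
    fun_prop
  unfold Jw
  calc _ = ∑' k, ∫⁻ u in Set.Ioc (0:ℝ) 1, ENNReal.ofReal (u ^ (-s - 1)) *
      ENNReal.ofReal (min 1 (u * wt k)) * ENNReal.ofReal (‖fCoeff f k‖ ^ 2) := by
        congr 1
        funext k
        rw [lintegral_mul_const _ (hm k)]
    _ = ∫⁻ u in Set.Ioc (0:ℝ) 1, ∑' k, ENNReal.ofReal (u ^ (-s - 1)) *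
      ENNReal.ofReal (min 1 (u * wt k)) * ENNReal.ofReal (‖fCoeff f k‖ ^ 2) := by
        rw [lintegral_tsum]
        intro k
        exact ((hm k).mul_const _).aemeasurable
    _ = _ := by
        apply setLIntegral_congr_fun measurableSet_Ioc
        intro u hu
        simp only [SW]
        rw [← ENNReal.tsum_mul_left]
        congr 1
        funext k
        have := wt_one k
        have := hu.1
        rw [mul_assoc, ← ENNReal.ofReal_mul (le_min zero_le_one (by positivity))]

lemma interp {F g : (Fin 2 → ℝ) → ℝ} {c : ENNReal} (hc : c ≠ ⊤) {s : ℝ} (hs0 : 0 < s) (hs1 : s < 1)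
    (h : ∀ t : ℝ, 0 < t → t ≤ 1 → SW (fun k => min 1 (t * wt k)) F ≤
      c * SW (fun k => min 1 (t * wt k)) g) :
    SW (fun k => wt k ^ s) F ≤
      c * ENNReal.ofReal (1 / (1 - s) + 1 / s) * SW (fun k => wt k ^ s) g := by
  have h1s : 0 < 1 - s := by linarith
  calc SW (fun k => wt k ^ s) F ≤ ∑' k, Jw s (wt k) * ENNReal.ofReal (‖fCoeff F k‖ ^ 2) := by
        apply ENNReal.tsum_le_tsum
        intro k
        have hw := wt_one k
        rw [ENNReal.ofReal_mul (by positivity)]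
        gcongr
        refine le_trans ?_ (J_low hs1 hw)
        apply ENNReal.ofReal_le_ofReal
        rw [le_div_iff₀ h1s]
        have : 0 ≤ wt k ^ s := by positivity
        nlinarith
    _ = _ := J_sum s F
    _ ≤ ∫⁻ u in Set.Ioc (0:ℝ) 1, c * (ENNReal.ofReal (u ^ (-s - 1)) *
          SW (fun k => min 1 (u * wt k)) g) := by
        apply setLIntegral_mono' measurableSet_Ioc
        intro u hu
        rw [mul_left_comm]
        gcongr
        exact h u hu.1 hu.2
    _ = c * ∑' k, Jw s (wt k) * ENNReal.ofReal (‖fCoeff g k‖ ^ 2) := by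
        rw [lintegral_const_mul' _ _ hc, J_sum]
    _ ≤ c * ∑' k, ENNReal.ofReal (1 / (1 - s) + 1 / s) * ENNReal.ofReal (wt k ^ s * ‖fCoeff g k‖ ^ 2) := by
        refine mul_le_mul_right (ENNReal.tsum_le_tsum fun k => ?_) c
        have hw := wt_one k
        rw [ENNReal.ofReal_mul (by positivity), ← mul_assoc]
        gcongr
        exact J_up hs0 hs1 hw
    _ = _ := by
        rw [ENNReal.tsum_mul_left, ← mul_assoc]
        rfl

lemma SW_fin {g : (Fin 2 → ℝ) → ℝ} (hg : ContDiff ℝ 1 g) (hpg : Per g) {s : ℝ} (hs1 : s ≤ 1) :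
    SW (fun k => wt k ^ s) g ≠ ⊤ := by
  have h1 : SW wt g ≠ ⊤ := by
    rw [SW_one hpg hg]
    exact ENNReal.ofReal_ne_top
  refine ne_top_of_le_ne_top h1 (SW_mono fun k => ?_)
  have := Real.rpow_le_rpow_of_exponent_le (wt_one k) hs1
  rw [Real.rpow_one] at this
  gcongr

lemma main_SW {ρ : (Fin 2 → ℝ) → ℝ} (hρ : ContDiff ℝ 1 ρ) (hs : HasCompactSupport ρ)
    (h0 : ∀ z, 0 ≤ ρ z) (hρ1 : ∫ z, ρ z = 1) {s : ℝ} (hs0 : 0 ≤ s) (hs1 : s ≤ 1) (α : Fin 2) :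
    ∃ K : ℝ, 0 ≤ K ∧ ∀ h g : (Fin 2 → ℝ) → ℝ, ContDiff ℝ 1 h → Per h → ContDiff ℝ 2 g → Per g →
      ∀ κ : ℝ, 0 < κ → ∀ Mh : ℝ, 0 ≤ Mh → (∀ x i, |pd2 i h x| ≤ Mh) →
      SW (fun k => wt k ^ s) (Tc ρ κ h α g) ≤
        ENNReal.ofReal (K * Mh ^ 2) * SW (fun k => wt k ^ s) g := by
  rcases hs0.eq_or_lt with rfl | hs0
  · refine ⟨2 * (∫ z, PhiA ρ α z) ^ 2 + 16, by positivity, ?_⟩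
    intro h g hh hph hg hpg κ hκ Mh hM0 hM
    simp only [Real.rpow_zero]
    exact Tc_S0 hρ hs h0 hh hph hg hpg hκ α hM0 hM
  rcases hs1.eq_or_lt with rfl | hs1
  · refine ⟨2 * (∫ z, PhiA ρ α z) ^ 2 + 16, by positivity, ?_⟩
    intro h g hh hph hg hpg κ hκ Mh hM0 hM
    simp only [Real.rpow_one]
    exact Tc_S1 hρ hs h0 hρ1 hh hph hg hpg hκ α hM0 hM
  have hD := Dc_pos ρ
  have h1s : 0 < 1 - s := by linarith
  have hD0 : 0 ≤ Dc ρ := by linarith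
  refine ⟨4 * ((2 * (∫ z, PhiA ρ α z) ^ 2 + 16) * Dc ρ) * (1 / (1 - s) + 1 / s), by positivity, ?_⟩
  intro h g hh hph hg hpg κ hκ Mh hM0 hM
  have := interp (F := Tc ρ κ h α g) (g := g)
    (c := 4 * (ENNReal.ofReal ((2 * (∫ z, PhiA ρ α z) ^ 2 + 16) * Mh ^ 2) * ENNReal.ofReal (Dc ρ)))
    (by finiteness) hs0 hs1
    (fun t ht ht1 => K_step hρ hs h0 hρ1 hh hph hg hpg hκ α hM0 hM ht ht1)
  refine this.trans (le_of_eq ?_)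
  congr 1
  have e4 : (4 : ENNReal) = ENNReal.ofReal 4 := by simp
  rw [e4, ← ENNReal.ofReal_mul (by positivity), ← ENNReal.ofReal_mul (by positivity),
    ← ENNReal.ofReal_mul (by positivity)]
  congr 1
  ring

/-- Commutator estimate for mollifiers:
`|[Λ_κ, h] ∂̄ g|_{H^s} ≤ C ‖h‖_{C¹} |g|_{H^s}` for `0 ≤ s ≤ 1`, uniformly in `κ`. -/
theorem stmt16 (ρ : (Fin 2 → ℝ) → ℝ) (hρsm : ContDiff ℝ (⊤ : ℕ∞) ρ)
    (hρsupp : HasCompactSupport ρ) (hρ0 : ∀ x, 0 ≤ ρ x) (hρ1 : (∫ x, ρ x) = 1)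
    (s : ℝ) (hs0 : 0 ≤ s) (hs1 : s ≤ 1) (α : Fin 2) :
    ∃ C > 0, ∀ κ : ℝ, 0 < κ → ∀ h g : (Fin 2 → ℝ) → ℝ,
      ContDiff ℝ 1 h → ContDiff ℝ (⊤ : ℕ∞) g →
      (∀ (x : Fin 2 → ℝ) (k : Fin 2), h (x + Pi.single k 1) = h x) →
      (∀ (x : Fin 2 → ℝ) (k : Fin 2), g (x + Pi.single k 1) = g x) →
      ∀ Mh : ℝ, (∀ x, |h x| ≤ Mh) → (∀ x i, |pd2 i h x| ≤ Mh) →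
      Real.sqrt (hsNormSq s
          (fun x => moll ρ κ (fun y => h y * pd2 α g y) x - h x * moll ρ κ (pd2 α g) x))
        ≤ C * Mh * Real.sqrt (hsNormSq s g) := by
  obtain ⟨K, hK, H⟩ := main_SW (hρsm.of_le (by exact_mod_cast le_top)) hρsupp hρ0 hρ1 hs0 hs1 α
  refine ⟨√K + 1, by positivity, ?_⟩
  intro κ hκ h g hh hg hph hpg Mh hM hM'
  have hM0 : 0 ≤ Mh := (abs_nonneg _).trans (hM 0)
  have hg2 : ContDiff ℝ 2 g := hg.of_le (by
    have : ((2 : ℕ∞) : WithTop ℕ∞) ≤ ((⊤ : ℕ∞) : WithTop ℕ∞) := by exact_mod_cast le_top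
    exact this)
  have hg1 : ContDiff ℝ 1 g := hg.of_le (by exact_mod_cast le_top)
  have key := H h g hh hph hg2 hpg κ hκ Mh hM0 hM'
  have e : (fun x => moll ρ κ (fun y => h y * pd2 α g y) x - h x * moll ρ κ (pd2 α g) x) =
      Tc ρ κ h α g := by
    funext x
    rw [moll_eq ρ hκ, moll_eq ρ hκ]
    rfl
  rw [e, hs_toReal, hs_toReal]
  have fin := SW_fin hg1 hpg hs1
  have h1 := ENNReal.toReal_mono (by finiteness) key
  rw [ENNReal.toReal_mul, ENNReal.toReal_ofReal (by positivity)] at h1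
  refine (Real.sqrt_le_sqrt h1).trans ?_
  rw [Real.sqrt_mul (by positivity), Real.sqrt_mul hK, Real.sqrt_sq hM0]
  gcongr
  linarith
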